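/- For every fixed integer d ≥ 1, as the integer b → ∞ (with b > d), I(b,d,2) = b·log b + a₁/b³ + a₂/b⁴ + a₃/b⁵ + a₄/b⁶ + a₅/b⁷ + O(b⁻⁸), where: a₁ = (d + 1/2)/d²; a₂ = −(d + 1/2)/(d²(d+1)); a₃ = (d + 1/2)ζ(2) − (30d³ + 70d² + 47d + 10)/(12d³(d+1)²); a₄ = −(2d+1)d·ζ(3) + (2d+1)ζ(2) − (12d⁶ − 60d⁵ − 258d⁴ − 342d³ − 212d² − 61d − 6)/(12d⁴(d+1)³); a₅ = 3(d + 1/2)d²ζ(4) − (d + 1/2)(6d+1)ζ(3) − (60d⁷ + 240d⁶ + 440d⁵ + 561d⁴ + 465d³ + 219d² + 54d + 6)/(12d⁵(d+1)³). -/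

import Mathlib

open Filter Asymptotics

/-- The Irwin harmonic sum `I(b,d,k)`: sum of `1/m` over positive integers `m`
whose base-`b` digit list contains the digit `d` exactly `k` times. -/
noncomputable def irwinSum (b d k : ℕ) : ℝ :=
  ∑' m : ℕ, if 0 < m ∧ (Nat.digits b m).count d = k then (1 : ℝ) / m else 0

/-- `ζ(s) = ∑_{n ≥ 1} n^{-s}` for an integer exponent. -/
noncomputable def zetaR (s : ℕ) : ℝ := ∑' n : ℕ, 1 / ((n : ℝ) + 1) ^ s

/-!
Split off the two leading digits `a`, `c` of a number and put `A = a + c / b`. The rest of the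
digits contributes the integral of `x ↦ 1 / (A + x / b)` against a measure on `[0, 1]` given by
the digit strings with the remaining number of occurrences of `d`, whose total mass is `b`. If
that measure is replaced by `b` times Lebesgue measure, the integrals add up to `b log b`. Hence
`b * (I(b, d, 2) - b log b)` is the sum over `(a, c)` of the values `invDeviation b d k A` of the
difference of the two measures, with `k` equal to `2` minus the number of `d`s among `a, c`.

Expanding `1 / (A + x / b)` in powers of `x / b` turns such a value into the series
`∑ (-1) ^ j * moment b d k j * b⁻ʲ / A ^ (j + 1)`. Self-similarity under prepending a digit gives a
linear recursion for the moments, whose solution in `ℝ⟦X⟧` with `X = 1 / b` is their asymptotic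
expansion. As the `j`-th moment with `j ≥ 2` is `O(b ^ (-(2 * k + 2)))`, finitely many of them
matter. Finally, the sums of `1 / A ^ (j + 1)` over the digits are values and tails of the zeta
series, which have Euler–Maclaurin expansions in `1 / b`.
-/

namespace Irwin

open Finset
open scoped NNReal

/-! ### Sums over digit strings -/

section StringSum

/-- The action on `[0, 1]` of prepending the digit `a` to a base-`b` expansion: it maps
`0.a₁a₂…` to `0.aa₁a₂…`. -/
noncomputable def prepend (b a : ℕ) (x : ℝ) : ℝ := (a + x) / b

/-- The integral of a function against `b⁻ˡ` times the counting measure on the numbers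
`0.a₁…aₗ` whose base-`b` digits `a₁, …, aₗ` contain `d` exactly `k` times. Letting `k` be an
integer makes the recursion on the first digit uniform; the functional vanishes for `k < 0`. -/
noncomputable def stringSum (b d : ℕ) : ℕ → ℤ → (ℝ → ℝ) →ₗ[ℝ] ℝ
  | 0, k => if k = 0 then LinearMap.proj 0 else 0
  | l + 1, k => (b : ℝ)⁻¹ • ∑ a ∈ range b,
      stringSum b d l (if a = d then k - 1 else k) ∘ₗ LinearMap.funLeft ℝ ℝ (prepend b a)

variable {b d : ℕ} {k : ℤ} {f g : ℝ → ℝ}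

lemma stringSum_zero : stringSum b d 0 k f = if k = 0 then f 0 else 0 := by
  simp only [stringSum]
  split_ifs <;> rfl

lemma stringSum_succ (l : ℕ) :
    stringSum b d (l + 1) k f = (b : ℝ)⁻¹ *
      ∑ a ∈ range b, stringSum b d l (if a = d then k - 1 else k) (f ∘ prepend b a) := by
  simp [stringSum, LinearMap.funLeft]

lemma prepend_mapsTo {a : ℕ} (ha : a < b) :
    Set.MapsTo (prepend b a) (Set.Icc 0 1) (Set.Icc 0 1) := by
  intro x ⟨hx₀, hx₁⟩
  have hab : (a : ℝ) + 1 ≤ b := by exact_mod_cast ha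
  refine ⟨by unfold prepend; positivity, div_le_one_of_le₀ (by linarith) b.cast_nonneg⟩

lemma continuous_prepend (a : ℕ) : Continuous (prepend b a) := by
  unfold prepend
  fun_prop

lemma continuousOn_comp_prepend (hf : ContinuousOn f (Set.Icc 0 1)) {a : ℕ} (ha : a < b) :
    ContinuousOn (f ∘ prepend b a) (Set.Icc 0 1) :=
  hf.comp (continuous_prepend a).continuousOn (prepend_mapsTo ha)

lemma sum_range_ite_eq (hd : d < b) (F : ℕ → ℤ → ℝ) :
    ∑ a ∈ range b, F a (if a = d then k - 1 else k) =
      F d (k - 1) + ∑ a ∈ (range b).erase d, F a k := by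
  rw [← add_sum_erase _ _ (mem_range.2 hd), if_pos rfl]
  congr 1
  exact sum_congr rfl fun a ha => by rw [if_neg (ne_of_mem_erase ha)]

lemma stringSum_of_neg (hk : k < 0) (l : ℕ) (f : ℝ → ℝ) : stringSum b d l k f = 0 := by
  induction l generalizing k f with
  | zero => simp [stringSum_zero, hk.ne]
  | succ l ih =>
    rw [stringSum_succ, sum_eq_zero, mul_zero]
    intro a _
    exact ih (by split_ifs <;> omega) _

lemma stringSum_mono (h : ∀ x ∈ Set.Icc (0 : ℝ) 1, f x ≤ g x) (l : ℕ) :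
    stringSum b d l k f ≤ stringSum b d l k g := by
  induction l generalizing k f g with
  | zero =>
    rw [stringSum_zero, stringSum_zero]
    split_ifs
    exacts [h 0 (by simp), le_rfl]
  | succ l ih =>
    rw [stringSum_succ, stringSum_succ]
    gcongr with a ha
    exact ih fun x hx => h _ (prepend_mapsTo (mem_range.1 ha) hx)

lemma stringSum_congr (h : Set.EqOn f g (Set.Icc 0 1)) (l : ℕ) :
    stringSum b d l k f = stringSum b d l k g :=
  (stringSum_mono (fun _ hx => (h hx).le) l).antisymm (stringSum_mono (fun _ hx => (h hx).ge) l)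

lemma abs_stringSum_le {C : ℝ} (h : ∀ x ∈ Set.Icc (0 : ℝ) 1, |f x| ≤ C) (l : ℕ) :
    |stringSum b d l k f| ≤ C * stringSum b d l k 1 := by
  have h_upper : stringSum b d l k f ≤ stringSum b d l k (C • 1) :=
    stringSum_mono (fun x hx => by simpa using (abs_le.1 (h x hx)).2) l
  have h_lower : stringSum b d l k ((-C) • 1) ≤ stringSum b d l k f :=
    stringSum_mono (fun x hx => by simpa using (abs_le.1 (h x hx)).1) l
  rw [map_smul, smul_eq_mul] at h_upper h_lower
  exact abs_le.2 ⟨by linarith, h_upper⟩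

lemma stringSum_one (hd : d < b) (l k : ℕ) :
    stringSum b d l k 1 = l.choose k * (b : ℝ)⁻¹ ^ k * (1 - (b : ℝ)⁻¹) ^ (l - k) := by
  have hb : (b : ℝ) ≠ 0 := by exact_mod_cast (by omega : b ≠ 0)
  have h_rec (l : ℕ) (k : ℤ) : stringSum b d (l + 1) k 1 =
      (b : ℝ)⁻¹ * stringSum b d l (k - 1) 1 + (1 - (b : ℝ)⁻¹) * stringSum b d l k 1 := by
    have h := sum_range_ite_eq (k := k) hd fun _ j => stringSum b d l j 1
    rw [sum_const, card_erase_of_mem (mem_range.2 hd), card_range, nsmul_eq_mul,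
      Nat.cast_pred (by omega)] at h
    simp only [stringSum_succ, Pi.one_comp, h]
    field_simp
  induction l generalizing k with
  | zero => cases k <;> simp [stringSum_zero, Nat.cast_add_one_ne_zero]
  | succ l ih =>
    cases k with
    | zero =>
      have h_zero := ih 0
      simp only [Nat.cast_zero, Nat.choose_zero_right, Nat.cast_one, pow_zero, one_mul,
        Nat.sub_zero] at h_zero
      simp [h_rec, stringSum_of_neg, h_zero, pow_succ']
    | succ k =>
      have h_pred : ((k + 1 : ℕ) : ℤ) - 1 = k := by push_cast; ring
      rw [h_rec, h_pred, ih k, ih (k + 1), Nat.choose_succ_succ, Nat.succ_sub_succ]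
      rcases lt_or_ge k l with hkl | hkl
      · obtain ⟨m, rfl⟩ := Nat.exists_eq_add_of_lt hkl
        rw [show k + m + 1 - k = m + 1 by omega, show k + m + 1 - (k + 1) = m by omega]
        push_cast
        ring
      · rw [Nat.choose_eq_zero_of_lt (by omega : l < k + 1)]
        push_cast
        ring

lemma hasSum_stringSum_one (hd : d < b) (k : ℕ) :
    HasSum (fun l => stringSum b d l k 1) b := by
  have hb : (1 : ℝ) ≤ b := by exact_mod_cast (by omega : 1 ≤ b)
  have h_norm : ‖1 - (b : ℝ)⁻¹‖ < 1 := by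
    have := inv_le_one_of_one_le₀ hb
    have : (0 : ℝ) < (b : ℝ)⁻¹ := by positivity
    rw [Real.norm_eq_abs, abs_lt]
    constructor <;> linarith
  have h := (hasSum_choose_mul_geometric_of_norm_lt_one k h_norm).mul_left ((b : ℝ)⁻¹ ^ k)
  rw [← hasSum_nat_add_iff' k, sum_eq_zero fun l hl => by
    simp [stringSum_one hd, Nat.choose_eq_zero_of_lt (mem_range.1 hl)]]
  have h_term (n : ℕ) : stringSum b d (n + k) k 1 =
      (b : ℝ)⁻¹ ^ k * ((n + k).choose k * (1 - (b : ℝ)⁻¹) ^ n) := by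
    rw [stringSum_one hd, Nat.add_sub_cancel]
    ring
  rw [sub_sub_cancel, one_div, ← inv_pow, inv_inv, pow_succ, ← mul_assoc, ← mul_pow,
    inv_mul_cancel₀ (by positivity), one_pow, one_mul] at h
  simpa only [h_term, sub_zero] using h

lemma summable_stringSum (hd : d < b) (k : ℤ) (hf : ContinuousOn f (Set.Icc 0 1)) :
    Summable fun l => stringSum b d l k f := by
  rcases lt_or_ge k 0 with hk | hk
  · simpa only [stringSum_of_neg hk] using summable_zero
  lift k to ℕ using hk
  obtain ⟨C, hC⟩ := isCompact_Icc.exists_bound_of_continuousOn hf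
  exact .of_norm_bounded ((hasSum_stringSum_one hd k).summable.mul_left C) (abs_stringSum_le hC)

/-- The integral of `f` against the measure `∑ b⁻ˡ δ_x` over all finite base-`b` strings
`x = 0.a₁…aₗ` containing the digit `d` exactly `k` times. -/
noncomputable def digitSum (b d : ℕ) (k : ℤ) (f : ℝ → ℝ) : ℝ := ∑' l, stringSum b d l k f

lemma digitSum_of_neg (hk : k < 0) (f : ℝ → ℝ) : digitSum b d k f = 0 := by
  simp [digitSum, stringSum_of_neg hk]

lemma digitSum_eq (hd : d < b) (hf : ContinuousOn f (Set.Icc 0 1)) :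
    digitSum b d k f = (if k = 0 then f 0 else 0) +
      (b : ℝ)⁻¹ * ∑ a ∈ range b, digitSum b d (if a = d then k - 1 else k) (f ∘ prepend b a) := by
  unfold digitSum
  rw [(summable_stringSum hd k hf).tsum_eq_zero_add, stringSum_zero, ← Summable.tsum_finsetSum,
    ← tsum_mul_left]
  · simp only [stringSum_succ]
  · exact fun a ha => summable_stringSum hd _ (continuousOn_comp_prepend hf (mem_range.1 ha))

end StringSum

/-! ### The deviation from Lebesgue measure -/

section Deviation

/-- The deviation of `digitSum b d k` from `b` times Lebesgue measure on `[0, 1]`; the two have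
the same total mass when `0 ≤ k`. -/
noncomputable def deviation (b d : ℕ) (k : ℤ) (f : ℝ → ℝ) : ℝ :=
  digitSum b d k f - b * ∫ x in (0 : ℝ)..1, f x

variable {b d : ℕ} {k : ℤ} {f g : ℝ → ℝ}

lemma intervalIntegrable_of_continuousOn_Icc (hf : ContinuousOn f (Set.Icc 0 1)) :
    IntervalIntegrable f MeasureTheory.volume 0 1 :=
  hf.intervalIntegrable_of_Icc zero_le_one

lemma deviation_of_neg (hk : k < 0) (f : ℝ → ℝ) :
    deviation b d k f = -b * ∫ x in (0 : ℝ)..1, f x := by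
  rw [deviation, digitSum_of_neg hk]
  ring

lemma deviation_congr (h : Set.EqOn f g (Set.Icc 0 1)) :
    deviation b d k f = deviation b d k g := by
  unfold deviation digitSum
  rw [intervalIntegral.integral_congr (g := g) (by rwa [Set.uIcc_of_le zero_le_one])]
  simp only [stringSum_congr h]

lemma deviation_const_mul (c : ℝ) (f : ℝ → ℝ) :
    deviation b d k (fun x => c * f x) = c * deviation b d k f := by
  have h (l : ℕ) : stringSum b d l k (fun x => c * f x) = c * stringSum b d l k f :=
    map_smul (stringSum b d l k) c f
  simp only [deviation, digitSum, h, tsum_mul_left, intervalIntegral.integral_const_mul]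
  ring

lemma deviation_sum {ι : Type*} (hd : d < b) (s : Finset ι) {F : ι → ℝ → ℝ}
    (hF : ∀ i ∈ s, ContinuousOn (F i) (Set.Icc 0 1)) :
    deviation b d k (fun x => ∑ i ∈ s, F i x) = ∑ i ∈ s, deviation b d k (F i) := by
  have h (l : ℕ) :
      stringSum b d l k (fun x => ∑ i ∈ s, F i x) = ∑ i ∈ s, stringSum b d l k (F i) := by
    rw [← map_sum]
    congr 1
    ext x
    simp
  simp only [deviation, digitSum, h]
  rw [Summable.tsum_finsetSum fun i hi => summable_stringSum hd k (hF i hi),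
    intervalIntegral.integral_finsetSum fun i hi =>
      intervalIntegrable_of_continuousOn_Icc (hF i hi), sum_sub_distrib, mul_sum]

lemma deviation_sub (hd : d < b) (hf : ContinuousOn f (Set.Icc 0 1))
    (hg : ContinuousOn g (Set.Icc 0 1)) :
    deviation b d k (fun x => f x - g x) = deviation b d k f - deviation b d k g := by
  have h (l : ℕ) : stringSum b d l k (fun x => f x - g x) =
      stringSum b d l k f - stringSum b d l k g := map_sub (stringSum b d l k) f g
  simp only [deviation, digitSum, h]
  rw [(summable_stringSum hd k hf).tsum_sub (summable_stringSum hd k hg),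
    intervalIntegral.integral_sub (intervalIntegrable_of_continuousOn_Icc hf)
      (intervalIntegrable_of_continuousOn_Icc hg)]
  ring

lemma deviation_const (hd : d < b) (k : ℕ) (c : ℝ) : deviation b d k (fun _ => c) = 0 := by
  have h_one : deviation b d k 1 = 0 := by
    simp [deviation, digitSum, (hasSum_stringSum_one hd k).tsum_eq]
  have h := deviation_const_mul (b := b) (d := d) (k := k) c 1
  simpa [h_one] using h

lemma sum_integral_comp_prepend (hb : b ≠ 0) (hf : ContinuousOn f (Set.Icc 0 1)) :
    ∑ a ∈ range b, ∫ x in (0 : ℝ)..1, (f ∘ prepend b a) x = b * ∫ x in (0 : ℝ)..1, f x := by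
  have hb' : (b : ℝ) ≠ 0 := by exact_mod_cast hb
  have h_piece (a : ℕ) : ∫ x in (0 : ℝ)..1, (f ∘ prepend b a) x =
      b * ∫ x in ((a : ℝ) / b)..(((a + 1 : ℕ) : ℝ) / b), f x := by
    have h := intervalIntegral.integral_comp_add_div (a := 0) (b := 1) f hb' ((a : ℝ) / b)
    simp only [← add_div, add_zero] at h
    simpa [prepend] using h
  simp only [h_piece, ← mul_sum]
  rw [intervalIntegral.sum_integral_adjacent_intervals (f := f) (a := fun a : ℕ => (a : ℝ) / b)]
  · simp [hb']
  intro a ha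
  refine ContinuousOn.intervalIntegrable_of_Icc (by gcongr; omega) (hf.mono ?_)
  refine Set.Icc_subset_Icc (by positivity) (div_le_one_of_le₀ ?_ b.cast_nonneg)
  exact_mod_cast ha

lemma deviation_eq (hd : d < b) (hf : ContinuousOn f (Set.Icc 0 1)) :
    deviation b d k f = (if k = 0 then f 0 else 0) +
      (b : ℝ)⁻¹ * ∑ a ∈ range b, deviation b d (if a = d then k - 1 else k) (f ∘ prepend b a) := by
  have hb : (b : ℝ) ≠ 0 := by exact_mod_cast (by omega : b ≠ 0)
  simp only [deviation, sum_sub_distrib, ← mul_sum, digitSum_eq hd hf,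
    sum_integral_comp_prepend (by omega : b ≠ 0) hf]
  field_simp
  ring

/-- The part of the recursion for `deviation b d k` that involves smaller values of `k`. -/
noncomputable def deviationHead (b d : ℕ) (k : ℤ) (f : ℝ → ℝ) : ℝ :=
  (if k = 0 then f 0 else 0) + (b : ℝ)⁻¹ * deviation b d (k - 1) (f ∘ prepend b d)

lemma deviation_eq_head_add (hd : d < b) (hf : ContinuousOn f (Set.Icc 0 1)) :
    deviation b d k f = deviationHead b d k f +
      (b : ℝ)⁻¹ * ∑ a ∈ (range b).erase d, deviation b d k (f ∘ prepend b a) := by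
  rw [deviation_eq hd hf, sum_range_ite_eq hd fun a k => deviation b d k (f ∘ prepend b a),
    deviationHead]
  ring

end Deviation

section Lipschitz

variable {b d : ℕ} {k : ℤ} {f : ℝ → ℝ} {K : ℝ≥0}

lemma lipschitzOnWith_comp_prepend (hf : LipschitzOnWith K f (Set.Icc 0 1)) {a : ℕ} (ha : a < b) :
    LipschitzOnWith (K / b) (f ∘ prepend b a) (Set.Icc 0 1) := by
  refine .of_dist_le_mul fun x hx y hy => ?_
  refine (hf.dist_le_mul _ (prepend_mapsTo ha hx) _ (prepend_mapsTo ha hy)).trans_eq ?_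
  rw [Real.dist_eq, prepend, prepend, ← sub_div, abs_div, Nat.abs_cast, add_sub_add_left_eq_sub,
    ← Real.dist_eq, NNReal.coe_div, NNReal.coe_natCast]
  ring

lemma abs_sub_zero_le_of_lipschitzOnWith (hf : LipschitzOnWith K f (Set.Icc 0 1)) {x : ℝ}
    (hx : x ∈ Set.Icc (0 : ℝ) 1) : |f x - f 0| ≤ K * x := by
  have h := hf.dist_le_mul x hx 0 (by simp)
  rwa [Real.dist_eq, Real.dist_eq, sub_zero, abs_of_nonneg hx.1] at h

lemma abs_integral_le_of_forall_abs_le {C : ℝ} (hf : ∀ x ∈ Set.Icc (0 : ℝ) 1, |f x| ≤ C) :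
    |∫ x in (0 : ℝ)..1, f x| ≤ C := by
  have h := intervalIntegral.norm_integral_le_of_norm_le_const (a := 0) (b := 1) (f := f) (C := C)
    fun x hx => hf x (Set.Ioc_subset_Icc_self (by rwa [Set.uIoc_of_le zero_le_one] at hx))
  simpa using h

lemma abs_deviation_le_two_mul (hd : d < b) (hf : LipschitzOnWith K f (Set.Icc 0 1)) (k : ℕ) :
    |deviation b d k f| ≤ 2 * b * K := by
  have h_sub : deviation b d k f = deviation b d k (fun x => f x - f 0) := by
    rw [deviation_sub hd hf.continuousOn continuousOn_const, deviation_const hd, sub_zero]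
  have h_le (x : ℝ) (hx : x ∈ Set.Icc (0 : ℝ) 1) : |f x - f 0| ≤ K :=
    (abs_sub_zero_le_of_lipschitzOnWith hf hx).trans (mul_le_of_le_one_right K.2 hx.2)
  have h_sum : |digitSum b d k fun x => f x - f 0| ≤ K * b := by
    rw [digitSum, ← Real.norm_eq_abs]
    exact tsum_of_norm_bounded ((hasSum_stringSum_one hd k).mul_left (K : ℝ))
      (abs_stringSum_le h_le)
  have h_int : |b * ∫ x in (0 : ℝ)..1, (f x - f 0)| ≤ b * K := by
    rw [abs_mul, Nat.abs_cast]
    gcongr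
    exact abs_integral_le_of_forall_abs_le h_le
  rw [h_sub, deviation]
  linarith [abs_sub (digitSum b d k fun x => f x - f 0) (b * ∫ x in (0 : ℝ)..1, (f x - f 0))]

lemma abs_sum_deviation_comp_prepend_le (hd : d < b) {C : ℝ} (hC : 0 ≤ C)
    (h : ∀ ⦃K : ℝ≥0⦄ ⦃f : ℝ → ℝ⦄, LipschitzOnWith K f (Set.Icc 0 1) → |deviation b d k f| ≤ C * K)
    (hf : LipschitzOnWith K f (Set.Icc 0 1)) :
    |(b : ℝ)⁻¹ * ∑ a ∈ (range b).erase d, deviation b d k (f ∘ prepend b a)| ≤ C / 4 * K := by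
  have hb : (0 : ℝ) < b := by exact_mod_cast (by omega : 0 < b)
  have h_sum : |∑ a ∈ (range b).erase d, deviation b d k (f ∘ prepend b a)| ≤
      (b - 1) * (C * (K / b)) := by
    refine (abs_sum_le_sum_abs _ _).trans ((sum_le_card_nsmul _ _ (C * (K / b)) ?_).trans_eq ?_)
    · exact fun a ha => by
        simpa using h (lipschitzOnWith_comp_prepend hf (mem_range.1 (mem_of_mem_erase ha)))
    · rw [card_erase_of_mem (mem_range.2 hd), card_range, nsmul_eq_mul, Nat.cast_pred (by omega)]
  have h_quarter : ((b : ℝ) - 1) / b ^ 2 ≤ 1 / 4 := by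
    rw [div_le_div_iff₀ (by positivity) (by norm_num)]
    nlinarith [sq_nonneg ((b : ℝ) - 2)]
  calc |(b : ℝ)⁻¹ * ∑ a ∈ (range b).erase d, deviation b d k (f ∘ prepend b a)|
      ≤ (b : ℝ)⁻¹ * ((b - 1) * (C * (K / b))) := by
        rw [abs_mul, abs_inv, Nat.abs_cast]
        gcongr
    _ = (b - 1) / b ^ 2 * (C * K) := by field_simp
    _ ≤ 1 / 4 * (C * K) := by gcongr
    _ = C / 4 * K := by ring

/- The contraction `f ↦ b⁻¹ ∑ f ∘ prepend b a` shrinks Lipschitz constants by a factor `4`, so a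
bound on the head term propagates with the factor `1 / (1 - 1 / 4) ≤ 2`. -/
lemma abs_deviation_le_of_head (hd : d < b) {k : ℕ} {s : ℝ} (hs : 0 ≤ s)
    (h : ∀ ⦃K : ℝ≥0⦄ ⦃f : ℝ → ℝ⦄, LipschitzOnWith K f (Set.Icc 0 1) →
      |deviationHead b d k f| ≤ s * K)
    (hf : LipschitzOnWith K f (Set.Icc 0 1)) : |deviation b d k f| ≤ 2 * s * K := by
  have h_iter (n : ℕ) : ∀ ⦃K : ℝ≥0⦄ ⦃f : ℝ → ℝ⦄, LipschitzOnWith K f (Set.Icc 0 1) →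
      |deviation b d k f| ≤ (2 * b * (1 / 4) ^ n + 2 * s) * K := by
    induction n with
    | zero =>
      intro K f hf
      refine (abs_deviation_le_two_mul hd hf k).trans ?_
      gcongr
      linarith
    | succ n ih =>
      intro K f hf
      rw [deviation_eq_head_add hd hf.continuousOn]
      calc |_| ≤ s * K + (2 * b * (1 / 4) ^ n + 2 * s) / 4 * K :=
            (abs_add_le _ _).trans (add_le_add (h hf)
              (abs_sum_deviation_comp_prepend_le hd (by positivity) ih hf))
        _ = (2 * b * (1 / 4) ^ (n + 1) + 3 / 2 * s) * K := by ring
        _ ≤ (2 * b * (1 / 4) ^ (n + 1) + 2 * s) * K := by gcongr; norm_num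
  have h_lim : Tendsto (fun n : ℕ => (2 * b * (1 / 4 : ℝ) ^ n + 2 * s) * K) atTop
      (nhds ((2 * b * 0 + 2 * s) * K)) :=
    (((tendsto_pow_atTop_nhds_zero_of_lt_one (by norm_num) (by norm_num)).const_mul _).add_const
      _).mul_const _
  simpa using ge_of_tendsto' h_lim fun n => h_iter n hf

lemma abs_deviationHead_zero_le (hd : d < b) (hf : LipschitzOnWith K f (Set.Icc 0 1)) :
    |deviationHead b d 0 f| ≤ (d + 1) / b * K := by
  have hb : (b : ℝ) ≠ 0 := by exact_mod_cast (by omega : b ≠ 0)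
  have h_cont := continuousOn_comp_prepend hf.continuousOn hd
  have h_eq : deviationHead b d 0 f = -∫ x in (0 : ℝ)..1, ((f ∘ prepend b d) x - f 0) := by
    rw [deviationHead, deviation_of_neg (by norm_num), intervalIntegral.integral_sub
      (intervalIntegrable_of_continuousOn_Icc h_cont) (by simp)]
    simp [hb]
    ring
  rw [h_eq, abs_neg]
  refine abs_integral_le_of_forall_abs_le fun x hx => ?_
  calc |f (prepend b d x) - f 0| ≤ K * ((d + x) / b) :=
        abs_sub_zero_le_of_lipschitzOnWith hf (prepend_mapsTo hd hx)
    _ ≤ K * ((d + 1) / b) := by gcongr; exact hx.2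
    _ = (d + 1) / b * K := mul_comm _ _

theorem abs_deviation_le (hd : d < b) (k : ℕ) (hf : LipschitzOnWith K f (Set.Icc 0 1)) :
    |deviation b d k f| ≤ 2 ^ (k + 1) * (d + 1) / b ^ (2 * k + 1) * K := by
  have hb : (0 : ℝ) < b := by exact_mod_cast (by omega : 0 < b)
  induction k generalizing f K with
  | zero =>
    refine (abs_deviation_le_of_head hd (s := (d + 1) / b) (by positivity)
      (fun K f hf => abs_deviationHead_zero_le hd hf) hf).trans_eq ?_
    ring
  | succ k ih =>
    refine (abs_deviation_le_of_head hd (s := 2 ^ (k + 1) * (d + 1) / b ^ (2 * k + 1) / b ^ 2)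
      (by positivity) (fun K f hf => ?_) hf).trans_eq (by field_simp; ring)
    have h_pred : ((k + 1 : ℕ) : ℤ) - 1 = k := by push_cast; ring
    rw [deviationHead, h_pred, if_neg (by omega), zero_add, abs_mul, abs_inv, Nat.abs_cast]
    calc (b : ℝ)⁻¹ * |deviation b d k (f ∘ prepend b d)|
        ≤ (b : ℝ)⁻¹ * (2 ^ (k + 1) * (d + 1) / b ^ (2 * k + 1) * (K / b)) := by
          gcongr
          simpa using ih (lipschitzOnWith_comp_prepend hf hd)
      _ = _ := by field_simp

end Lipschitz

/-! ### Irwin sums as sums over digit strings -/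

section IrwinSum

variable {b d : ℕ}

lemma sum_range_mul_eq_sum_sum (m q : ℕ) (f : ℕ → ℝ) :
    ∑ n ∈ range (m * q), f n = ∑ c ∈ range m, ∑ n ∈ range q, f (c * q + n) := by
  induction m with
  | zero => simp
  | succ m ih => rw [Nat.succ_mul, sum_range_add, sum_range_succ, ih]

lemma sum_range_pow_eq_sum_leading_digit (hb : 1 < b) (f : ℕ → ℝ) (L : ℕ) :
    ∑ m ∈ range (b ^ L), f m = f 0 +
      ∑ l ∈ range L, ∑ a ∈ Ico 1 b, ∑ n ∈ range (b ^ l), f (a * b ^ l + n) := by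
  induction L with
  | zero => simp
  | succ L ih =>
    rw [pow_succ', sum_range_mul_eq_sum_sum, sum_range_succ, ← add_assoc, ← ih,
      range_eq_Ico (a := b), sum_eq_sum_Ico_succ_bot (by omega)]
    simp

lemma count_digits_mul_add (hb : 1 < b) {a c : ℕ} (ha : 0 < a) (hc : c < b) :
    (Nat.digits b (a * b + c)).count d = (Nat.digits b a).count d + if c = d then 1 else 0 := by
  rw [show a * b + c = c + b * a by ring, Nat.digits_add b hb c a hc (Or.inr ha.ne'),
    List.count_cons]
  simp

lemma continuousOn_one_div_add {A c : ℝ} (hA : 0 < A) (hc : 0 ≤ c) :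
    ContinuousOn (fun x => 1 / (A + x / c)) (Set.Icc 0 1) := by
  refine ContinuousOn.div (by fun_prop) (by fun_prop) fun x hx => ?_
  have := div_nonneg hx.1 hc
  positivity

lemma one_div_add_comp_prepend (A c : ℝ) (a : ℕ) :
    (fun x => 1 / (A + x / c)) ∘ prepend b a = fun x => 1 / (A + a / (b * c) + x / (b * c)) := by
  ext x
  simp only [Function.comp_apply, prepend]
  rw [div_div, add_div, add_assoc]

lemma sum_range_pow_ite_count_digits (hb : 1 < b) (l k : ℕ) {a : ℕ} (ha : 0 < a) :
    ∑ n ∈ range (b ^ l),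
      (if (Nat.digits b (a * b ^ l + n)).count d = k then 1 / ((a * b ^ l + n : ℕ) : ℝ) else 0) =
    stringSum b d l (k - (Nat.digits b a).count d) fun x => 1 / (a + x) := by
  induction l generalizing a with
  | zero => simp [stringSum_zero, sub_eq_zero, eq_comm]
  | succ l ih =>
    rw [pow_succ', sum_range_mul_eq_sum_sum, stringSum_succ, mul_sum]
    refine sum_congr rfl fun c hc => ?_
    have h_block := ih (a := a * b + c) (by positivity)
    rw [count_digits_mul_add hb ha (mem_range.1 hc)] at h_block
    have h_index : (if c = d then (k : ℤ) - (Nat.digits b a).count d - 1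
        else k - (Nat.digits b a).count d) =
        k - ((Nat.digits b a).count d + if c = d then 1 else 0 : ℕ) := by
      split_ifs <;> push_cast <;> ring
    have h_scale : (b : ℝ)⁻¹ • ((fun x => 1 / ((a : ℝ) + x)) ∘ prepend b c) =
        fun x => 1 / (((a * b + c : ℕ) : ℝ) + x) := by
      ext x
      have : (b : ℝ) ≠ 0 := by positivity
      simp only [Pi.smul_apply, Function.comp_apply, prepend, smul_eq_mul, one_div]
      rw [← mul_inv]
      congr 1
      push_cast
      field_simp
      ring
    rw [h_index, ← smul_eq_mul (b : ℝ)⁻¹, ← map_smul, h_scale, ← h_block]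
    refine sum_congr rfl fun n _ => ?_
    rw [show a * (b * b ^ l) + (c * b ^ l + n) = (a * b + c) * b ^ l + n by ring]

lemma hasSum_of_tendsto_sum_range_pow {f : ℕ → ℝ} {S : ℝ} (hb : 1 < b) (hf : ∀ n, 0 ≤ f n)
    (h : Tendsto (fun L => ∑ n ∈ range (b ^ L), f n) atTop (nhds S)) : HasSum f S := by
  have h_summable : Summable f := by
    obtain ⟨C, hC⟩ := h.bddAbove_range
    refine summable_of_sum_range_le (c := C) hf fun n => le_trans ?_ (hC ⟨n, rfl⟩)
    exact sum_le_sum_of_subset_of_nonneg (range_mono (Nat.lt_pow_self hb).le) fun i _ _ => hf i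
  have h_pow := h_summable.hasSum.tendsto_sum_nat.comp (tendsto_pow_atTop_atTop_of_one_lt hb)
  exact tendsto_nhds_unique h_pow h ▸ h_summable.hasSum

theorem irwinSum_eq_sum_digitSum (hb : 1 < b) (hd : d < b) (k : ℕ) :
    irwinSum b d k =
      ∑ a ∈ Ico 1 b, digitSum b d (if a = d then k - 1 else k) fun x => 1 / (a + x) := by
  have h_summable (a : ℕ) (ha : a ∈ Ico 1 b) : Summable fun l =>
      stringSum b d l (if a = d then k - 1 else k) fun x => 1 / ((a : ℝ) + x) := by
    have h := continuousOn_one_div_add (A := a) (by exact_mod_cast (mem_Ico.1 ha).1) zero_le_one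
    simp only [div_one] at h
    exact summable_stringSum hd _ h
  refine (hasSum_of_tendsto_sum_range_pow hb (fun m => by split_ifs <;> positivity) ?_).tsum_eq
  simp only [digitSum]
  rw [← Summable.tsum_finsetSum h_summable]
  refine (summable_sum h_summable).hasSum.tendsto_sum_nat.congr fun L => ?_
  rw [sum_range_pow_eq_sum_leading_digit hb]
  simp only [lt_self_iff_false, false_and, if_false, zero_add]
  refine sum_congr rfl fun l _ => sum_congr rfl fun a ha => ?_
  obtain ⟨ha_pos, ha_lt⟩ := mem_Ico.1 ha
  have h_count : (if a = d then (k : ℤ) - 1 else k) = k - (Nat.digits b a).count d := by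
    rw [Nat.digits_of_lt b a (by omega) ha_lt, List.count_singleton]
    split_ifs <;> simp_all
  rw [h_count, ← sum_range_pow_ite_count_digits hb l k ha_pos]
  refine sum_congr rfl fun n _ => ?_
  have h_pos : 0 < a * b ^ l + n := by positivity
  simp only [h_pos, true_and]

lemma sum_integral_one_div_add (hb : 1 ≤ b) :
    ∑ a ∈ Ico 1 b, ∫ x in (0 : ℝ)..1, 1 / ((a : ℝ) + x) = Real.log b := by
  induction b, hb using Nat.le_induction with
  | base => simp
  | succ n hn ih =>
    have hn' : (0 : ℝ) < n := by exact_mod_cast hn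
    rw [sum_Ico_succ_top hn, ih, intervalIntegral.integral_comp_add_left (fun x => 1 / x) (n : ℝ),
      integral_one_div_of_pos (by simpa using hn') (by positivity),
      Real.log_div (by positivity) (by positivity)]
    push_cast
    simp

theorem irwinSum_sub_mul_log (hd₀ : 1 ≤ d) (hd : d < b) (k : ℕ) :
    irwinSum b d k - b * Real.log b = deviation b d (k - 1) (fun x => 1 / (d + x)) +
      ∑ a ∈ (Ico 1 b).erase d, deviation b d k fun x => 1 / (a + x) := by
  rw [irwinSum_eq_sum_digitSum (by omega) hd, ← sum_integral_one_div_add (by omega), mul_sum,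
    ← sum_sub_distrib, ← add_sum_erase _ _ (mem_Ico.2 ⟨hd₀, hd⟩), if_pos rfl]
  congr 1
  exact sum_congr rfl fun a ha => by rw [if_neg (ne_of_mem_erase ha), deviation]

/-- The deviation of the function `x ↦ 1 / (A + x / b)`. Two leading digits `a, c` contribute the
value at `A = a + c / b`. -/
noncomputable def invDeviation (b d : ℕ) (k : ℤ) (A : ℝ) : ℝ :=
  deviation b d k fun x => 1 / (A + x / b)

lemma deviation_one_div_add (hd : d < b) {k : ℕ} (hk : k ≠ 0) {a : ℕ} (ha : 0 < a) :
    deviation b d k (fun x => 1 / (a + x)) = (b : ℝ)⁻¹ * (invDeviation b d (k - 1) (a + d / b) +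
      ∑ c ∈ (range b).erase d, invDeviation b d k (a + c / b)) := by
  have h_cont := continuousOn_one_div_add (A := a) (by exact_mod_cast ha) zero_le_one
  have h_comp (c : ℕ) := one_div_add_comp_prepend (b := b) a 1 c
  simp only [div_one, mul_one] at h_cont h_comp
  rw [deviation_eq hd h_cont, if_neg (by exact_mod_cast hk), zero_add]
  simp only [h_comp]
  rw [sum_range_ite_eq hd fun c k => deviation b d k fun x => 1 / (a + (c : ℝ) / b + x / b)]
  rfl

theorem mul_irwinSum_sub_mul_log (hd₀ : 1 ≤ d) (hd : d < b) {k : ℕ} (hk : 2 ≤ k) :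
    b * (irwinSum b d k - b * Real.log b) =
      invDeviation b d (k - 2) (d + d / b) +
      ∑ c ∈ (range b).erase d, invDeviation b d (k - 1) (d + c / b) +
      ∑ a ∈ (Ico 1 b).erase d, invDeviation b d (k - 1) (a + d / b) +
      ∑ a ∈ (Ico 1 b).erase d, ∑ c ∈ (range b).erase d, invDeviation b d k (a + c / b) := by
  have hb : (b : ℝ) ≠ 0 := by exact_mod_cast (by omega : b ≠ 0)
  have h_head := deviation_one_div_add hd (k := k - 1) (by omega) hd₀
  rw [Nat.cast_pred (by omega), sub_sub, one_add_one_eq_two] at h_head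
  have h_tail := sum_congr rfl fun a (ha : a ∈ (Ico 1 b).erase d) =>
    deviation_one_div_add hd (k := k) (by omega) (mem_Ico.1 (mem_of_mem_erase ha)).1
  rw [irwinSum_sub_mul_log hd₀ hd, h_head, h_tail, ← mul_sum, sum_add_distrib]
  field_simp
  ring

end IrwinSum

/-! ### Asymptotic expansions in `1 / b` -/

section Expansion

open PowerSeries

/-- The function `f` has the asymptotic expansion `f b = ∑ i < N, pᵢ b⁻ⁱ + O(b⁻ᴺ)` as `b → ∞`.
Only the first `N` coefficients of `p` matter; a power series is used so that expansions multiply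
like power series. -/
def HasExpansion (N : ℕ) (f : ℕ → ℝ) (p : ℝ⟦X⟧) : Prop :=
  (fun b : ℕ => f b - (trunc N p).eval (b : ℝ)⁻¹) =O[atTop] fun b : ℕ => (b : ℝ)⁻¹ ^ N

variable {M N : ℕ} {f g h : ℕ → ℝ} {p q r : ℝ⟦X⟧}

lemma isBigO_inv_pow_of_le (h : M ≤ N) :
    (fun b : ℕ => (b : ℝ)⁻¹ ^ N) =O[atTop] fun b : ℕ => (b : ℝ)⁻¹ ^ M := by
  refine .of_bound' (Eventually.of_forall fun b => ?_)
  rw [norm_pow, norm_pow]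
  exact pow_le_pow_of_le_one (norm_nonneg _) (by simpa using Nat.cast_inv_le_one b) h

namespace HasExpansion

lemma of_isBigO (hf : f =O[atTop] fun b : ℕ => (b : ℝ)⁻¹ ^ N) : HasExpansion N f 0 := by
  simpa [HasExpansion] using hf

lemma isBigO (hf : HasExpansion N f 0) : f =O[atTop] fun b : ℕ => (b : ℝ)⁻¹ ^ N := by
  simpa [HasExpansion] using hf

lemma congr_coeff (hf : HasExpansion N f p) (h : ∀ i < N, coeff i p = coeff i q) :
    HasExpansion N f q := by
  have h_trunc : trunc N p = trunc N q := by
    ext i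
    simp only [coeff_trunc]
    split_ifs with hi
    exacts [h i hi, rfl]
  rwa [HasExpansion, ← h_trunc]

lemma add (hf : HasExpansion N f p) (hg : HasExpansion N g q) :
    HasExpansion N (fun b => f b + g b) (p + q) := by
  refine (IsBigO.add hf hg).congr_left fun b => ?_
  rw [map_add, Polynomial.eval_add]
  ring

lemma sub (hf : HasExpansion N f p) (hg : HasExpansion N g q) :
    HasExpansion N (fun b => f b - g b) (p - q) := by
  refine (IsBigO.sub hf hg).congr_left fun b => ?_
  rw [map_sub, Polynomial.eval_sub]
  ring

lemma sum {ι : Type*} (s : Finset ι) {f : ι → ℕ → ℝ} {p : ι → ℝ⟦X⟧}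
    (h : ∀ i ∈ s, HasExpansion N (f i) (p i)) :
    HasExpansion N (fun b => ∑ i ∈ s, f i b) (∑ i ∈ s, p i) := by
  refine (IsBigO.fun_sum h).congr_left fun b => ?_
  rw [map_sum, Polynomial.eval_finsetSum, sum_sub_distrib]

lemma congr_isBigO (hf : HasExpansion N f p)
    (h : (fun b => g b - f b) =O[atTop] fun b : ℕ => (b : ℝ)⁻¹ ^ N) : HasExpansion N g p := by
  simpa using (of_isBigO h).add hf

lemma congr' (hf : HasExpansion N f p) (h : f =ᶠ[atTop] g) : HasExpansion N g p :=
  hf.congr_isBigO ((isBigO_zero _ _).congr' (h.mono fun b hb => by simp [hb]) .rfl)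

lemma polynomial (N : ℕ) (P : Polynomial ℝ) :
    HasExpansion N (fun b => P.eval (b : ℝ)⁻¹) (P : ℝ⟦X⟧) := by
  induction P using Polynomial.induction_on' with
  | add P Q hP hQ => simpa using hP.add hQ
  | monomial n a =>
    rcases lt_or_ge n N with hn | hn
    · have h_trunc : trunc N (Polynomial.monomial n a : ℝ⟦X⟧) = Polynomial.monomial n a :=
        trunc_coe_eq_self ((Polynomial.natDegree_monomial_le a).trans_lt hn)
      rw [HasExpansion, h_trunc]
      simpa using isBigO_zero _ _
    · refine (of_isBigO ?_).congr_coeff fun i hi => ?_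
      · simpa using (isBigO_inv_pow_of_le hn).const_mul_left a
      · simp [PowerSeries.coeff_monomial, (hi.trans_le hn).ne]

lemma mono (hf : HasExpansion N f p) (h : M ≤ N) : HasExpansion M f p := by
  refine ((polynomial M (trunc N p)).congr_isBigO
    (IsBigO.trans hf (isBigO_inv_pow_of_le h))).congr_coeff fun i hi => ?_
  rw [coeff_coe_trunc_of_lt (hi.trans_le h)]

lemma isBigO_one (hf : HasExpansion N f p) : f =O[atTop] fun _ => (1 : ℝ) := by
  simpa [HasExpansion] using hf.mono N.zero_le

lemma const (N : ℕ) (c : ℝ) : HasExpansion N (fun _ => c) (C c) := by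
  simpa using polynomial N (Polynomial.C c)

lemma inv_pow (N k : ℕ) : HasExpansion N (fun b => (b : ℝ)⁻¹ ^ k) (X ^ k) := by
  simpa using polynomial N (Polynomial.X ^ k)

lemma mul (hf : HasExpansion N f p) (hg : HasExpansion N g q) :
    HasExpansion N (fun b => f b * g b) (p * q) := by
  have h_left := IsBigO.mul hf hg.isBigO_one
  have h_right := IsBigO.mul (polynomial N (trunc N p)).isBigO_one hg
  simp only [mul_one, one_mul] at h_left h_right
  refine ((polynomial N (trunc N p * trunc N q)).congr_isBigO
    ((h_left.add h_right).congr_left fun b => ?_)).congr_coeff fun i hi => ?_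
  · rw [Polynomial.eval_mul]
    ring
  · rw [Polynomial.coe_mul, coeff_mul_eq_coeff_trunc_mul_trunc p q hi]

lemma const_mul (c : ℝ) (hf : HasExpansion N f p) :
    HasExpansion N (fun b => c * f b) (C c * p) :=
  (const N c).mul hf

lemma tendsto (hf : HasExpansion N f p) (hN : 0 < N) :
    Tendsto f atTop (nhds (constantCoeff p)) := by
  have h_one := hf.mono hN
  simp only [HasExpansion, trunc_one_left, Polynomial.eval_C, pow_one] at h_one
  have h_zero := h_one.trans_tendsto tendsto_inv_atTop_nhds_zero_nat
  simpa using h_zero.add_const (coeff 0 p)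

lemma inv_pow_mul_iff (N k : ℕ) :
    HasExpansion (N + k) (fun b => (b : ℝ)⁻¹ ^ k * f b) (X ^ k * p) ↔ HasExpansion N f p := by
  have h_trunc : trunc (N + k) (X ^ k * p) = Polynomial.X ^ k * trunc N p := by
    ext i
    rw [coeff_trunc, coeff_X_pow_mul', Polynomial.coeff_X_pow_mul', coeff_trunc]
    split_ifs <;> first | rfl | omega
  have h_factor (b : ℕ) : (b : ℝ)⁻¹ ^ k * f b - (trunc (N + k) (X ^ k * p)).eval (b : ℝ)⁻¹ =
      (b : ℝ)⁻¹ ^ k * (f b - (trunc N p).eval (b : ℝ)⁻¹) := by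
    rw [h_trunc, Polynomial.eval_mul, Polynomial.eval_pow, Polynomial.eval_X]
    ring
  have h_ne : ∀ᶠ b : ℕ in atTop, (b : ℝ)⁻¹ ^ k ≠ 0 := by
    filter_upwards [eventually_ne_atTop 0] with b hb
    positivity
  simp only [HasExpansion, h_factor, isBigO_mul_iff_isBigO_div h_ne]
  refine isBigO_congr .rfl (h_ne.mono fun b hb => ?_)
  simp only [pow_add, mul_div_cancel_right₀ _ hb]

lemma X_pow_mul_iff (k : ℕ) : HasExpansion (N + k) f (X ^ k * p) ↔
    HasExpansion N (fun b => (b : ℝ) ^ k * f b) p := by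
  rw [← inv_pow_mul_iff N k]
  refine ⟨fun h => h.congr' ?_, fun h => h.congr' ?_⟩ <;>
  · filter_upwards [eventually_ne_atTop 0] with b hb
    rw [← mul_assoc, ← mul_pow, inv_mul_cancel₀ (Nat.cast_ne_zero.2 hb), one_pow, one_mul]

lemma X_pow_mul_mul {k l : ℕ} (hf : HasExpansion (N + k) f (X ^ k * p))
    (hg : HasExpansion (N + l) g (X ^ l * q)) :
    HasExpansion (N + (k + l)) (fun b => f b * g b) (X ^ (k + l) * (p * q)) := by
  rw [X_pow_mul_iff] at hf hg ⊢
  refine (hf.mul hg).congr' (.of_eq (funext fun b => ?_))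
  ring

lemma X_pow_mul_mul_right {k : ℕ} (hf : HasExpansion (N + k) f (X ^ k * p))
    (hg : HasExpansion N g q) :
    HasExpansion (N + k) (fun b => f b * g b) (X ^ k * (p * q)) :=
  hf.X_pow_mul_mul (l := 0) (by simpa using hg)

lemma X_pow_mul_mul_inv_pow {k : ℕ} (hf : HasExpansion (N + k) f (X ^ k * p)) (j : ℕ) :
    HasExpansion (N + (k + j)) (fun b => f b * (b : ℝ)⁻¹ ^ j) (X ^ (k + j) * p) := by
  simpa using hf.X_pow_mul_mul (l := j) (q := 1) (by simpa using inv_pow (N + j) j)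

lemma natCast_mul {k : ℕ} (hf : HasExpansion (N + (k + 1)) f (X ^ (k + 1) * p)) :
    HasExpansion (N + k) (fun b => b * f b) (X ^ k * p) := by
  rw [X_pow_mul_iff] at hf ⊢
  refine hf.congr' (.of_eq (funext fun b => ?_))
  ring

lemma isBigO_inv_pow {k : ℕ} (hf : HasExpansion (N + k) f (X ^ k * p)) :
    f =O[atTop] fun b : ℕ => (b : ℝ)⁻¹ ^ k :=
  ((hf.mono (Nat.le_add_left k N)).congr_coeff fun i hi => by
    simp [coeff_X_pow_mul', hi.not_ge]).isBigO

lemma of_mul (hg : HasExpansion N g p) (hh : HasExpansion N h r)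
    (h_mul : ∀ᶠ b in atTop, g b * f b = h b) (hN : 0 < N) (hp : constantCoeff p ≠ 0)
    (h_coeff : ∀ i < N, coeff i (p * q) = coeff i r) : HasExpansion N f q := by
  have h_tendsto := hg.tendsto hN
  have h_inv : (fun b => (g b)⁻¹) =O[atTop] fun _ => (1 : ℝ) := (h_tendsto.inv₀ hp).isBigO_one ℝ
  have h_eval := (polynomial N (trunc N q)).congr_coeff (q := q) fun i hi => by
    rw [coeff_coe_trunc_of_lt hi]
  have h_diff := (hh.sub ((hg.mul h_eval).congr_coeff h_coeff))
  rw [sub_self] at h_diff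
  refine (h_inv.mul h_diff.isBigO).congr' ?_ (by simp)
  filter_upwards [h_mul, h_tendsto.eventually_ne hp] with b hb hg_ne
  rw [← hb]
  field_simp

lemma comp_mul (hf : HasExpansion N f p) {c : ℕ} (hc : 0 < c) :
    HasExpansion N (fun b => f (c * b)) (rescale (c : ℝ)⁻¹ p) := by
  have h_comp := hf.comp_tendsto (tendsto_id.const_mul_atTop' hc)
  have h_eval (b : ℕ) : (trunc N (rescale (c : ℝ)⁻¹ p)).eval (b : ℝ)⁻¹ =
      (trunc N p).eval ((c * b : ℕ) : ℝ)⁻¹ := by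
    rw [Polynomial.eval, Polynomial.eval, eval₂_trunc_eq_sum_range, eval₂_trunc_eq_sum_range]
    refine sum_congr rfl fun i _ => ?_
    rw [coeff_rescale]
    push_cast
    simp only [id_eq, mul_inv, mul_pow]
    ring
  simp only [HasExpansion, h_eval]
  refine h_comp.trans (.of_bound' ?_)
  filter_upwards [eventually_gt_atTop 0] with b hb
  simp only [Function.comp_apply, id_eq, norm_pow, norm_inv, RCLike.norm_natCast]
  gcongr
  exact Nat.le_mul_of_pos_left b hc

end HasExpansion

/-- The polynomial with the given list of coefficients, as a power series. -/
noncomputable def ofCoeffs (l : List ℝ) : ℝ⟦X⟧ := mk fun n => l.getD n 0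

@[simp]
lemma coeff_ofCoeffs (l : List ℝ) (n : ℕ) : coeff n (ofCoeffs l) = l.getD n 0 := coeff_mk _ _

lemma ofCoeffs_replicate_append (k : ℕ) (l : List ℝ) :
    ofCoeffs (List.replicate k 0 ++ l) = X ^ k * ofCoeffs l := by
  ext n
  rw [coeff_X_pow_mul', coeff_ofCoeffs, coeff_ofCoeffs]
  split_ifs with h
  · rw [List.getD_append_right _ _ _ _ (by simpa using h), List.length_replicate]
  · rw [List.getD_append _ _ _ _ (by simpa using h)]
    simp

end Expansion

/-! ### Moments of the deviation -/

section Moment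

variable {b d : ℕ}

/-- The `m`-th moment of `deviation b d k`. -/
noncomputable def moment (b d : ℕ) (k : ℤ) (m : ℕ) : ℝ := deviation b d k fun x => x ^ m

lemma moment_zero (hd : d < b) (k : ℕ) : moment b d k 0 = 0 := by
  simp [moment, deviation_const hd]

lemma deviation_const_add_pow (hd : d < b) (k : ℕ) (c : ℝ) (m : ℕ) :
    deviation b d k (fun x => (c + x) ^ m) =
      ∑ i ∈ range (m + 1), m.choose i * c ^ (m - i) * moment b d k i := by
  have h_binom : (fun x : ℝ => (c + x) ^ m) =
      fun x => ∑ i ∈ range (m + 1), m.choose i * c ^ (m - i) * x ^ i := by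
    ext x
    rw [add_comm, add_pow]
    exact sum_congr rfl fun i _ => by ring
  rw [h_binom, deviation_sum hd _ fun i _ => Continuous.continuousOn (by fun_prop)]
  simp only [deviation_const_mul, moment]

lemma deviation_neg_one_const_add_pow (c : ℝ) (m : ℕ) :
    deviation b d (-1) (fun x => (c + x) ^ m) =
      -b * (((c + 1) ^ (m + 1) - c ^ (m + 1)) / (m + 1)) := by
  rw [deviation_of_neg (by norm_num), intervalIntegral.integral_comp_add_left (fun x => x ^ m),
    integral_pow, add_zero]

theorem mul_moment (hd : d < b) (k : ℕ) {m : ℕ} (hm : m ≠ 0) :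
    ((b : ℝ) ^ (m + 1) - b + 1) * moment b d k m =
      deviation b d (k - 1) (fun x => (d + x) ^ m) +
      ∑ i ∈ range m, m.choose i * (∑ a ∈ range b, (a : ℝ) ^ (m - i) - d ^ (m - i)) *
        moment b d k i := by
  have hb : (b : ℝ) ≠ 0 := by exact_mod_cast (by omega : b ≠ 0)
  have h_comp (k : ℤ) (a : ℕ) : deviation b d k ((fun x => x ^ m) ∘ prepend b a) =
      (b : ℝ)⁻¹ ^ m * deviation b d k fun x => (a + x) ^ m := by
    rw [← deviation_const_mul]
    refine deviation_congr fun x _ => ?_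
    simp only [Function.comp_apply, prepend]
    rw [← mul_pow, inv_mul_eq_div]
  have h_sum : ∑ a ∈ (range b).erase d, deviation b d k (fun x => (a + x) ^ m) =
      (b - 1) * moment b d k m +
      ∑ i ∈ range m, m.choose i * (∑ a ∈ range b, (a : ℝ) ^ (m - i) - d ^ (m - i)) *
        moment b d k i := by
    simp only [deviation_const_add_pow hd k, sum_range_succ _ m, sum_add_distrib, sum_const,
      nsmul_eq_mul, card_erase_of_mem (mem_range.2 hd), card_range, Nat.choose_self, Nat.sub_self,
      pow_zero, Nat.cast_one, one_mul]
    rw [Nat.cast_pred (by omega), sum_comm, add_comm]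
    congr 1
    refine sum_congr rfl fun i _ => ?_
    rw [← sum_mul, ← mul_sum, sum_erase_eq_sub (mem_range.2 hd)]
  have h := deviation_eq_head_add (k := k) hd (f := fun x => x ^ m)
    (Continuous.continuousOn (by fun_prop))
  simp only [deviationHead, h_comp, ← mul_sum, h_sum, zero_pow hm, ite_self] at h
  rw [← moment] at h
  simp only [inv_pow] at h
  field_simp at h
  linear_combination h

end Moment

/-! ### Expanding `invDeviation` in moments -/

section InvDeviation

variable {b d : ℕ}

lemma one_div_add_eq_sum_add (J : ℕ) {A u : ℝ} (hA : A ≠ 0) (hAu : A + u ≠ 0) :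
    1 / (A + u) = ∑ j ∈ range J, (-1) ^ j * u ^ j / A ^ (j + 1) +
      (-1) ^ J * (u ^ J / (A ^ J * (A + u))) := by
  induction J with
  | zero => simp
  | succ J ih =>
    rw [ih, sum_range_succ, add_assoc]
    congr 1
    field_simp
    ring

lemma hasDerivAt_pow_div_mul_add (J : ℕ) {A u : ℝ} (hA : A ≠ 0) (hAu : A + u ≠ 0) :
    HasDerivAt (fun u => u ^ (J + 1) / (A ^ (J + 1) * (A + u)))
      (u ^ J * ((J + 1) * (A + u) - u) / (A ^ (J + 1) * (A + u) ^ 2)) u := by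
  refine ((hasDerivAt_pow (J + 1) u).fun_div
    (((hasDerivAt_id' u).const_add A).const_mul (A ^ (J + 1))) (by simp [hA, hAu])).congr_deriv ?_
  rw [Nat.add_sub_cancel]
  push_cast
  field_simp
  ring

lemma lipschitzOnWith_pow_div_mul_add (J : ℕ) {A h : ℝ≥0} (hA : 1 ≤ A) :
    LipschitzOnWith ((J + 1) * h ^ J / A ^ 2)
      (fun u : ℝ => u ^ (J + 1) / ((A : ℝ) ^ (J + 1) * (A + u))) (Set.Icc 0 h) := by
  have hA' : (1 : ℝ) ≤ A := by exact_mod_cast hA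
  refine (convex_Icc 0 (h : ℝ)).lipschitzOnWith_of_nnnorm_hasDerivWithin_le
    (fun u hu => (hasDerivAt_pow_div_mul_add J (by positivity)
      (add_pos_of_pos_of_nonneg (by positivity) hu.1).ne').hasDerivWithinAt) fun u ⟨hu₀, hu⟩ => ?_
  have h_num : 0 ≤ (J + 1) * (A + u) - u := by nlinarith [J.cast_nonneg (α := ℝ), A.2]
  rw [← NNReal.coe_le_coe, coe_nnnorm, Real.norm_of_nonneg (by positivity)]
  push_cast
  calc u ^ J * ((J + 1) * (A + u) - u) / (A ^ (J + 1) * (A + u) ^ 2)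
      ≤ u ^ J * ((J + 1) * (A + u)) / (A ^ (J + 1) * (A + u) ^ 2) := by gcongr; linarith
    _ = (J + 1) * u ^ J / (A ^ (J + 1) * (A + u)) := by field_simp
    _ ≤ (J + 1) * h ^ J / (A ^ 1 * (A + 0)) := by
      gcongr
      exact Nat.le_add_left 1 J
    _ = (J + 1) * h ^ J / A ^ 2 := by ring

lemma lipschitzOnWith_remainder (hb : 0 < b) (J : ℕ) {A : ℝ≥0} (hA : 1 ≤ A) :
    LipschitzOnWith ((J + 1) / (b ^ (J + 1) * A ^ 2))
      (fun x : ℝ => (x / b) ^ (J + 1) / ((A : ℝ) ^ (J + 1) * (A + x / b))) (Set.Icc 0 1) := by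
  have h_scale : LipschitzOnWith (b : ℝ≥0)⁻¹ (fun x : ℝ => x / b) (Set.Icc 0 1) := by
    refine .of_dist_le_mul fun x _ y _ => ?_
    rw [Real.dist_eq, Real.dist_eq, ← sub_div, abs_div, Nat.abs_cast]
    simp [div_eq_inv_mul]
  have h_maps : Set.MapsTo (fun x : ℝ => x / b) (Set.Icc 0 1) (Set.Icc 0 ((b : ℝ≥0)⁻¹ : ℝ≥0)) := by
    intro x ⟨hx₀, hx₁⟩
    refine ⟨by positivity, ?_⟩
    simp only [NNReal.coe_inv, NNReal.coe_natCast, div_eq_mul_inv]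
    exact mul_le_of_le_one_left (by positivity) hx₁
  have h_const : ((J : ℝ≥0) + 1) * (b : ℝ≥0)⁻¹ ^ J / A ^ 2 * (b : ℝ≥0)⁻¹ =
      (J + 1) / (b ^ (J + 1) * A ^ 2) := by
    rw [inv_pow]
    field_simp
    rw [pow_succ]
  exact h_const ▸ (lipschitzOnWith_pow_div_mul_add J hA).comp h_scale h_maps

theorem abs_invDeviation_sub_sum_le (hd : d < b) (k J : ℕ) {A : ℝ} (hA : 1 ≤ A) :
    |invDeviation b d k A -
        ∑ j ∈ range (J + 1), (-1) ^ j * moment b d k j * (b : ℝ)⁻¹ ^ j / A ^ (j + 1)| ≤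
      2 ^ (k + 1) * (d + 1) * (J + 1) * (b : ℝ)⁻¹ ^ (2 * k + J + 2) * (1 / A ^ 2) := by
  lift A to ℝ≥0 using by positivity
  have hA₀ : (0 : ℝ) < A := by positivity
  have h_lip := lipschitzOnWith_remainder (by omega : 0 < b) J (by exact_mod_cast hA : 1 ≤ A)
  have h_cont := (continuousOn_one_div_add hA₀ b.cast_nonneg)
  have h_sum : deviation b d k (fun x => ∑ j ∈ range (J + 1),
      (-1) ^ j * (b : ℝ)⁻¹ ^ j / A ^ (j + 1) * x ^ j) =
      ∑ j ∈ range (J + 1), (-1) ^ j * moment b d k j * (b : ℝ)⁻¹ ^ j / A ^ (j + 1) := by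
    rw [deviation_sum hd _ fun j _ => Continuous.continuousOn (by fun_prop)]
    refine sum_congr rfl fun j _ => ?_
    rw [deviation_const_mul, moment]
    ring
  have h_rem : Set.EqOn
      (fun x => 1 / ((A : ℝ) + x / b) -
        ∑ j ∈ range (J + 1), (-1) ^ j * (b : ℝ)⁻¹ ^ j / A ^ (j + 1) * x ^ j)
      (fun x => (-1) ^ (J + 1) * ((x / b) ^ (J + 1) / ((A : ℝ) ^ (J + 1) * (A + x / b))))
      (Set.Icc 0 1) := by
    intro x hx
    have hx₀ := hx.1
    simp only
    rw [one_div_add_eq_sum_add (J + 1) (u := x / b) (by positivity) (by positivity),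
      sub_eq_iff_eq_add, add_comm]
    congr 1
    exact sum_congr rfl fun j _ => by ring
  rw [← h_sum, invDeviation, ← deviation_sub hd h_cont (Continuous.continuousOn (by fun_prop)),
    deviation_congr h_rem, deviation_const_mul, abs_mul, abs_pow, abs_neg, abs_one, one_pow,
    one_mul]
  refine (abs_deviation_le hd k h_lip).trans_eq ?_
  push_cast
  have : (b : ℝ) ≠ 0 := by exact_mod_cast (by omega : b ≠ 0)
  rw [inv_pow]
  field_simp
  ring

end InvDeviation

/-! ### Asymptotic expansions of the moments -/

section MomentSeries

open PowerSeries

/-- The expansion of `b ^ -(p + 1) * (∑ a < b, a ^ p - d ^ p)` given by Faulhaber's formula. -/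
noncomputable def powerSumSeries (d p : ℕ) : ℝ⟦X⟧ :=
  ∑ i ∈ range (p + 1), C (bernoulli i * (p + 1).choose i / (p + 1) : ℝ) * X ^ i -
    C (d ^ p : ℝ) * X ^ (p + 1)

lemma hasExpansion_powerSum (N d p : ℕ) :
    HasExpansion N (fun b => (b : ℝ)⁻¹ ^ (p + 1) * (∑ a ∈ range b, (a : ℝ) ^ p - d ^ p))
      (powerSumSeries d p) := by
  refine ((HasExpansion.sum _ fun i _ => (HasExpansion.inv_pow N i).const_mul _).sub
    ((HasExpansion.inv_pow N (p + 1)).const_mul _)).congr' ?_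
  filter_upwards [eventually_ne_atTop 0] with b hb
  have h_faulhaber : ∑ a ∈ range b, (a : ℝ) ^ p =
      ∑ i ∈ range (p + 1), bernoulli i * (p + 1).choose i * (b : ℝ) ^ (p + 1 - i) / (p + 1) := by
    exact_mod_cast congrArg (Rat.cast : ℚ → ℝ) (sum_range_pow b p)
  rw [h_faulhaber, mul_sub, mul_sum, mul_comm (_ ^ (p + 1)) ((d : ℝ) ^ p)]
  congr 1
  refine sum_congr rfl fun i hi => ?_
  rw [pow_sub₀ _ (by positivity) (mem_range.1 hi).le, inv_pow, inv_pow]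
  field_simp

/-- The solution of the recursion which `mul_moment` imposes on the expansions of the moments of
`deviation b d k`, where `head m` is the expansion of the term that involves
`deviation b d (k - 1)`. -/
noncomputable def momentSeriesOfHead (d : ℕ) (head : ℕ → ℝ⟦X⟧) : ℕ → ℝ⟦X⟧
  | 0 => 0
  | m + 1 => (1 - X ^ (m + 1) + X ^ (m + 2))⁻¹ * (head (m + 1) +
      ∑ i : Fin (m + 1), C ((m + 1).choose i : ℝ) * X ^ (i : ℕ) * powerSumSeries d (m + 1 - i) *
        momentSeriesOfHead d head i)

/-- The power series in `1 / b` which expands `moment b d k m` as `b → ∞`. -/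
noncomputable def momentSeries (d : ℕ) : ℕ → ℕ → ℝ⟦X⟧
  | 0 => momentSeriesOfHead d fun m =>
      -C ((((d : ℝ) + 1) ^ (m + 1) - d ^ (m + 1)) / (m + 1)) * X ^ m
  | k + 1 => momentSeriesOfHead d fun m => X ^ (m + 1) *
      ∑ i ∈ range (m + 1), C (m.choose i * (d : ℝ) ^ (m - i)) * momentSeries d k i

variable {d m N : ℕ} {head : ℕ → ℝ⟦X⟧}

lemma constantCoeff_one_sub_X_pow_add (hm : m ≠ 0) :
    constantCoeff (1 - X ^ m + X ^ (m + 1) : ℝ⟦X⟧) = 1 := by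
  simp [hm]

lemma mul_momentSeriesOfHead (hm : m ≠ 0) :
    (1 - X ^ m + X ^ (m + 1)) * momentSeriesOfHead d head m = head m +
      ∑ i ∈ range m, C (m.choose i : ℝ) * X ^ i * powerSumSeries d (m - i) *
        momentSeriesOfHead d head i := by
  obtain ⟨m, rfl⟩ := Nat.exists_eq_succ_of_ne_zero hm
  rw [momentSeriesOfHead, ← mul_assoc, PowerSeries.mul_inv_cancel, one_mul,
    Fin.sum_univ_eq_sum_range fun i => C ((m + 1).choose i : ℝ) * X ^ i *
      powerSumSeries d (m + 1 - i) * momentSeriesOfHead d head i]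
  rw [constantCoeff_one_sub_X_pow_add hm]
  exact one_ne_zero

lemma inv_mul_moment {b : ℕ} (hd : d < b) (k : ℕ) (hm : m ≠ 0) :
    (1 - (b : ℝ)⁻¹ ^ m + (b : ℝ)⁻¹ ^ (m + 1)) * moment b d k m =
      (b : ℝ)⁻¹ ^ (m + 1) * deviation b d (k - 1) (fun x => (d + x) ^ m) +
      ∑ i ∈ range m, m.choose i * (b : ℝ)⁻¹ ^ i *
        ((b : ℝ)⁻¹ ^ (m - i + 1) * (∑ a ∈ range b, (a : ℝ) ^ (m - i) - d ^ (m - i))) *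
          moment b d k i := by
  have hb : (b : ℝ) ≠ 0 := by exact_mod_cast (by omega : b ≠ 0)
  have h := congrArg ((b : ℝ)⁻¹ ^ (m + 1) * ·) (mul_moment hd k hm)
  simp only [mul_add, mul_sum] at h
  convert h using 1
  · rw [inv_pow, inv_pow]
    field_simp
    ring
  · congr 1
    refine sum_congr rfl fun i hi => ?_
    have h_pow : (b : ℝ)⁻¹ ^ (m + 1) = (b : ℝ)⁻¹ ^ i * (b : ℝ)⁻¹ ^ (m - i + 1) := by
      rw [← pow_add]
      congr 1
      have := mem_range.1 hi
      omega
    rw [h_pow]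
    ring

lemma hasExpansion_momentSeriesOfHead {k : ℕ} (hN : 0 < N) (h_head : ∀ m ≠ 0, HasExpansion N
      (fun b => (b : ℝ)⁻¹ ^ (m + 1) * deviation b d (k - 1) fun x => (d + x) ^ m) (head m))
    (m : ℕ) :
    HasExpansion N (fun b => moment b d k m) (momentSeriesOfHead d head m) := by
  have h_lt : ∀ᶠ b in atTop, d < b := eventually_gt_atTop d
  induction m using Nat.strong_induction_on with
  | _ m ih =>
  rcases eq_or_ne m 0 with rfl | hm
  · rw [momentSeriesOfHead]
    exact .of_isBigO ((isBigO_zero _ _).congr' (h_lt.mono fun b hb => (moment_zero hb k).symm) .rfl)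
  have h_lower := HasExpansion.sum (range m) fun i hi =>
    (((HasExpansion.inv_pow N i).const_mul (m.choose i)).mul
      (hasExpansion_powerSum N d (m - i))).mul (ih i (mem_range.1 hi))
  refine .of_mul (((HasExpansion.const N 1).sub (.inv_pow N m)).add (.inv_pow N (m + 1)))
    ((h_head m hm).add h_lower) (h_lt.mono fun b hb => inv_mul_moment hb k hm) hN ?_ fun i _ => ?_
  · rw [map_one, constantCoeff_one_sub_X_pow_add hm]
    exact one_ne_zero
  · rw [map_one, mul_momentSeriesOfHead hm]

theorem hasExpansion_moment (N d k m : ℕ) :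
    HasExpansion N (fun b => moment b d k m) (momentSeries d k m) := by
  suffices h : HasExpansion (N + 1) (fun b => moment b d k m) (momentSeries d k m) from
    h.mono N.le_succ
  induction k generalizing m with
  | zero =>
    refine hasExpansion_momentSeriesOfHead N.succ_pos (fun m hm => ?_) m
    have h_mono := (HasExpansion.inv_pow (N + 1) m).const_mul
      (-((((d : ℝ) + 1) ^ (m + 1) - d ^ (m + 1)) / (m + 1)))
    rw [map_neg] at h_mono
    refine h_mono.congr' ?_
    filter_upwards [eventually_ne_atTop 0] with b hb
    rw [Nat.cast_zero, zero_sub, deviation_neg_one_const_add_pow, inv_pow, inv_pow]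
    field_simp
    ring
  | succ k ih =>
    refine hasExpansion_momentSeriesOfHead N.succ_pos (fun m _ => ?_) m
    refine ((HasExpansion.inv_pow (N + 1) (m + 1)).mul <|
      .sum _ fun i _ => (ih i).const_mul _).congr' ?_
    filter_upwards [eventually_gt_atTop d] with b hb
    rw [Nat.cast_succ, add_sub_cancel_right, deviation_const_add_pow hb k]

lemma X_pow_dvd_momentSeriesOfHead {l : ℕ} (h_head : ∀ m ≠ 0, X ^ (l + min m 2) ∣ head m) (m : ℕ) :
    X ^ (l + min m 2) ∣ momentSeriesOfHead d head m := by
  induction m using Nat.strong_induction_on with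
  | _ m ih =>
  rcases eq_or_ne m 0 with rfl | hm
  · rw [momentSeriesOfHead]
    exact dvd_zero _
  have h_unit : IsUnit (1 - X ^ m + X ^ (m + 1) : ℝ⟦X⟧) := by
    rw [isUnit_iff_constantCoeff, constantCoeff_one_sub_X_pow_add hm]
    exact isUnit_one
  rw [← h_unit.dvd_mul_left, mul_momentSeriesOfHead hm]
  refine dvd_add (h_head m hm) (dvd_sum fun i hi => ?_)
  rcases eq_or_ne i 0 with rfl | hi₀
  · simp [momentSeriesOfHead]
  refine (pow_dvd_pow X (by omega : _ ≤ i + (l + min i 2))).trans ?_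
  rw [pow_add]
  exact mul_dvd_mul ((dvd_mul_left _ _).mul_right _) (ih i (mem_range.1 hi))

lemma momentSeries_zero_right (d k : ℕ) : momentSeries d k 0 = 0 := by
  cases k <;> rw [momentSeries, momentSeriesOfHead]

theorem X_pow_dvd_momentSeries (d k m : ℕ) : X ^ (2 * k + min m 2) ∣ momentSeries d k m := by
  induction k generalizing m with
  | zero =>
    refine X_pow_dvd_momentSeriesOfHead (fun m _ => ?_) m
    exact (pow_dvd_pow X (by omega)).mul_left _
  | succ k ih =>
    refine X_pow_dvd_momentSeriesOfHead (fun m _ => ?_) m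
    rw [mul_sum]
    refine dvd_sum fun i hi => ?_
    rcases eq_or_ne i 0 with rfl | hi₀
    · simp [momentSeries_zero_right]
    refine (pow_dvd_pow X (by omega : _ ≤ m + 1 + (2 * k + min i 2))).trans ?_
    rw [pow_add]
    exact mul_dvd_mul_left _ ((ih i).mul_left _)

theorem moment_isBigO (d k : ℕ) (hm : 2 ≤ m) :
    (fun b => moment b d k m) =O[atTop] fun b : ℕ => (b : ℝ)⁻¹ ^ (2 * k + 2) := by
  have h_dvd := X_pow_dvd_momentSeries d k m
  rw [min_eq_right hm, X_pow_dvd_iff] at h_dvd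
  exact ((hasExpansion_moment _ d k m).congr_coeff fun i hi => by
    rw [h_dvd i hi, map_zero]).isBigO

end MomentSeries

/-! ### Coefficients of the moment series -/

section MomentCoeff

open PowerSeries

variable (d : ℕ)

lemma coeff_eq_of_mul {R : Type*} [CommRing R] {N : ℕ} {p q r : R⟦X⟧}
    (hr : IsUnit (constantCoeff r))
    (h : ∀ i < N, coeff i (r * p) = coeff i (r * q)) : ∀ i < N, coeff i p = coeff i q := by
  have h_unit : IsUnit r := isUnit_iff_constantCoeff.2 hr
  have h_dvd : X ^ N ∣ p - q := by
    rw [← h_unit.dvd_mul_left, X_pow_dvd_iff]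
    intro i hi
    rw [mul_sub, map_sub, h i hi, sub_self]
  intro i hi
  rw [← sub_eq_zero, ← map_sub]
  exact X_pow_dvd_iff.1 h_dvd i hi

lemma coeff_mul_eq_sum_range {R : Type*} [Semiring R] (p q : R⟦X⟧) (n : ℕ) :
    coeff n (p * q) = ∑ i ∈ range (n + 1), coeff i p * coeff (n - i) q := by
  rw [coeff_mul, Nat.sum_antidiagonal_eq_sum_range_succ fun i j => coeff i p * coeff j q]

lemma coeff_powerSumSeries (p i : ℕ) : coeff i (powerSumSeries d p) =
    (if i < p + 1 then (bernoulli i * (p + 1).choose i / (p + 1) : ℝ) else 0) -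
      if i = p + 1 then (d : ℝ) ^ p else 0 := by
  simp only [powerSumSeries, map_sub, map_sum, coeff_C_mul, coeff_X_pow, mul_ite, mul_one, mul_zero,
    Finset.sum_ite_eq, mem_range]

lemma coeff_one_sub_X_pow_add_mul {R : Type*} [CommRing R] (m i : ℕ) (p : R⟦X⟧) :
    coeff i ((1 - X ^ m + X ^ (m + 1)) * p) = coeff i p -
      (if m ≤ i then coeff (i - m) p else 0) + if m + 1 ≤ i then coeff (i - (m + 1)) p else 0 := by
  simp only [add_mul, sub_mul, one_mul, map_add, map_sub, coeff_X_pow_mul']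

lemma coeff_mul_momentSeriesOfHead (head : ℕ → ℝ⟦X⟧) (m i : ℕ) (hm : m ≠ 0) :
    coeff i ((1 - X ^ m + X ^ (m + 1)) * momentSeriesOfHead d head m) = coeff i (head m) +
      ∑ j ∈ range m, m.choose j * if j ≤ i then ∑ l ∈ range (i - j + 1),
        coeff l (powerSumSeries d (m - j)) * coeff (i - j - l) (momentSeriesOfHead d head j)
      else 0 := by
  rw [mul_momentSeriesOfHead hm, map_add, map_sum]
  simp only [mul_assoc, coeff_C_mul, coeff_X_pow_mul']
  simp only [coeff_mul_eq_sum_range]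

lemma coeff_mul_momentSeries_zero (m i : ℕ) (hm : m ≠ 0) :
    coeff i ((1 - X ^ m + X ^ (m + 1)) * momentSeries d 0 m) =
      -(if i = m then (((d : ℝ) + 1) ^ (m + 1) - d ^ (m + 1)) / (m + 1) else 0) +
      ∑ j ∈ range m, m.choose j * if j ≤ i then ∑ l ∈ range (i - j + 1),
        coeff l (powerSumSeries d (m - j)) * coeff (i - j - l) (momentSeries d 0 j) else 0 := by
  rw [momentSeries, coeff_mul_momentSeriesOfHead d _ m i hm, neg_mul, map_neg, coeff_C_mul,
    coeff_X_pow, mul_ite, mul_one, mul_zero]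

lemma coeff_mul_momentSeries_succ (k m i : ℕ) (hm : m ≠ 0) :
    coeff i ((1 - X ^ m + X ^ (m + 1)) * momentSeries d (k + 1) m) =
      (if m + 1 ≤ i then ∑ j ∈ range (m + 1),
        m.choose j * (d : ℝ) ^ (m - j) * coeff (i - (m + 1)) (momentSeries d k j) else 0) +
      ∑ j ∈ range m, m.choose j * if j ≤ i then ∑ l ∈ range (i - j + 1),
        coeff l (powerSumSeries d (m - j)) * coeff (i - j - l) (momentSeries d (k + 1) j)
      else 0 := by
  rw [momentSeries, coeff_mul_momentSeriesOfHead d _ m i hm, coeff_X_pow_mul']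
  simp only [map_sum, coeff_C_mul]

lemma coeff_momentSeries_zero_one : ∀ i < 6, coeff i (momentSeries d 0 1) =
    coeff i (ofCoeffs [0, -(d + 1 / 2), -(d + 1 / 2), 0, d + 1 / 2, d + 1 / 2]) := by
  refine coeff_eq_of_mul (r := 1 - X ^ 1 + X ^ 2) (by simp) fun i hi => ?_
  rw [coeff_mul_momentSeries_zero d 1 i (by norm_num), coeff_one_sub_X_pow_add_mul]
  interval_cases i
  all_goals norm_num [sum_range_succ, coeff_powerSumSeries, momentSeries_zero_right,
    -coeff_zero_eq_constantCoeff]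
  all_goals ring

lemma coeff_momentSeries_zero_two : ∀ i < 5, coeff i (momentSeries d 0 2) =
    coeff i (ofCoeffs [0, 0, -(d ^ 2 + 2 * d + 5 / 6), 0, d ^ 2 - 1 / 3]) := by
  refine coeff_eq_of_mul (r := 1 - X ^ 2 + X ^ 3) (by simp) fun i hi => ?_
  rw [coeff_mul_momentSeries_zero d 2 i (by norm_num), coeff_one_sub_X_pow_add_mul]
  interval_cases i
  all_goals norm_num [sum_range_succ, coeff_powerSumSeries, momentSeries_zero_right,
    -coeff_zero_eq_constantCoeff, coeff_momentSeries_zero_one]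
  all_goals ring

lemma coeff_momentSeries_zero_three : ∀ i < 4, coeff i (momentSeries d 0 3) =
    coeff i (ofCoeffs [0, 0, -(d + 1 / 2), -(d ^ 3 + 3 / 2 * d ^ 2 + d / 2)]) := by
  refine coeff_eq_of_mul (r := 1 - X ^ 3 + X ^ 4) (by simp) fun i hi => ?_
  rw [coeff_mul_momentSeries_zero d 3 i (by norm_num), coeff_one_sub_X_pow_add_mul]
  interval_cases i
  all_goals norm_num [sum_range_succ, coeff_powerSumSeries, momentSeries_zero_right,
    -coeff_zero_eq_constantCoeff, coeff_momentSeries_zero_one, coeff_momentSeries_zero_two]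
  all_goals ring

lemma coeff_momentSeries_zero_four : ∀ i < 3, coeff i (momentSeries d 0 4) =
    coeff i (ofCoeffs [0, 0, -(d + 1 / 2)]) := by
  refine coeff_eq_of_mul (r := 1 - X ^ 4 + X ^ 5) (by simp) fun i hi => ?_
  rw [coeff_mul_momentSeries_zero d 4 i (by norm_num), coeff_one_sub_X_pow_add_mul]
  interval_cases i
  all_goals norm_num [sum_range_succ, coeff_powerSumSeries, momentSeries_zero_right,
    -coeff_zero_eq_constantCoeff, coeff_momentSeries_zero_one, coeff_momentSeries_zero_two,
    coeff_momentSeries_zero_three]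
  all_goals ring

lemma coeff_momentSeries_one_one : ∀ i < 7, coeff i (momentSeries d 1 1) =
    coeff i (ofCoeffs [0, 0, 0, -(d + 1 / 2), -(2 * d + 1), -(d + 1 / 2), 2 * d + 1]) := by
  refine coeff_eq_of_mul (r := 1 - X ^ 1 + X ^ 2) (by simp) fun i hi => ?_
  rw [coeff_mul_momentSeries_succ d 0 1 i (by norm_num), coeff_one_sub_X_pow_add_mul]
  interval_cases i
  all_goals norm_num [sum_range_succ, coeff_powerSumSeries, momentSeries_zero_right,
    -coeff_zero_eq_constantCoeff, coeff_momentSeries_zero_one]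
  all_goals ring

lemma coeff_momentSeries_one_two : ∀ i < 6, coeff i (momentSeries d 1 2) =
    coeff i (ofCoeffs [0, 0, 0, 0, -(2 * d ^ 2 + 2 * d + 1 / 2),
      -(3 * d ^ 2 + 4 * d + 4 / 3)]) := by
  refine coeff_eq_of_mul (r := 1 - X ^ 2 + X ^ 3) (by simp) fun i hi => ?_
  rw [coeff_mul_momentSeries_succ d 0 2 i (by norm_num), coeff_one_sub_X_pow_add_mul]
  interval_cases i
  all_goals norm_num [sum_range_succ, coeff_powerSumSeries, momentSeries_zero_right,
    -coeff_zero_eq_constantCoeff, coeff_momentSeries_zero_one, coeff_momentSeries_zero_two,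
    coeff_momentSeries_one_one]
  all_goals ring

lemma coeff_momentSeries_one_three : ∀ i < 5, coeff i (momentSeries d 1 3) =
    coeff i (ofCoeffs [0, 0, 0, 0, -(d + 1 / 2)]) := by
  refine coeff_eq_of_mul (r := 1 - X ^ 3 + X ^ 4) (by simp) fun i hi => ?_
  rw [coeff_mul_momentSeries_succ d 0 3 i (by norm_num), coeff_one_sub_X_pow_add_mul]
  interval_cases i
  all_goals norm_num [sum_range_succ, coeff_powerSumSeries, momentSeries_zero_right,
    -coeff_zero_eq_constantCoeff, coeff_momentSeries_zero_one, coeff_momentSeries_zero_two,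
    coeff_momentSeries_zero_three, coeff_momentSeries_one_one, coeff_momentSeries_one_two]
  all_goals ring

lemma coeff_momentSeries_two_one : ∀ i < 7, coeff i (momentSeries d 2 1) =
    coeff i (ofCoeffs [0, 0, 0, 0, 0, -(d + 1 / 2), -(3 * d + 3 / 2)]) := by
  refine coeff_eq_of_mul (r := 1 - X ^ 1 + X ^ 2) (by simp) fun i hi => ?_
  rw [coeff_mul_momentSeries_succ d 1 1 i (by norm_num), coeff_one_sub_X_pow_add_mul]
  interval_cases i
  all_goals norm_num [sum_range_succ, coeff_powerSumSeries, momentSeries_zero_right,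
    -coeff_zero_eq_constantCoeff, coeff_momentSeries_one_one]
  all_goals ring

end MomentCoeff

/-! ### Tails of the zeta series -/

section ZetaTail

/-- The tail `∑_{a ≥ n} a⁻ᵖ` of the series for `ζ(p)`. -/
noncomputable def zetaTail (p n : ℕ) : ℝ := ∑' a : ℕ, 1 / ((a + n : ℕ) : ℝ) ^ p

variable {p N : ℕ}

lemma zetaTail_one (p : ℕ) : zetaTail p 1 = zetaR p := by
  simp [zetaTail, zetaR]

lemma sum_range_one_div_add_pow (hp : 2 ≤ p) (n b : ℕ) :
    ∑ c ∈ range b, 1 / ((n + c : ℕ) : ℝ) ^ p = zetaTail p n - zetaTail p (n + b) := by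
  have h_summable : Summable fun a : ℕ => 1 / ((a + n : ℕ) : ℝ) ^ p :=
    (summable_nat_add_iff n).2 (Real.summable_one_div_nat_pow.2 hp)
  have h := h_summable.sum_add_tsum_nat_add b
  rw [eq_sub_iff_add_eq, zetaTail, zetaTail, ← h]
  simp only [add_comm, add_left_comm]

lemma tendsto_zetaTail (p : ℕ) : Tendsto (zetaTail p) atTop (nhds 0) :=
  tendsto_sum_nat_add fun a : ℕ => 1 / (a : ℝ) ^ p

lemma eventually_nonneg_of_eventually_succ_le {w : ℕ → ℝ} (hw : Tendsto w atTop (nhds 0))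
    (h_le : ∀ᶠ n in atTop, w (n + 1) ≤ w n) : ∀ᶠ n in atTop, 0 ≤ w n := by
  obtain ⟨n₀, hn₀⟩ := eventually_atTop.1 h_le
  filter_upwards [eventually_ge_atTop n₀] with n hn
  refine le_of_tendsto hw ((eventually_ge_atTop n).mono fun m hm => ?_)
  induction m, hm using Nat.le_induction with
  | base => rfl
  | succ m hm ih => exact (hn₀ m (hn.trans hm)).trans ih

lemma inv_pow_le_two_pow_mul_sub {n : ℕ} (hn : n ≠ 0) (N : ℕ) :
    (n : ℝ)⁻¹ ^ (N + 2) ≤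
      2 ^ (N + 2) * ((n : ℝ)⁻¹ ^ (N + 1) - ((n + 1 : ℕ) : ℝ)⁻¹ ^ (N + 1)) := by
  have h_pos : (0 : ℝ) < n := by positivity
  have h_one : (1 : ℝ) ≤ n := by exact_mod_cast Nat.one_le_iff_ne_zero.2 hn
  have h_anti : ((n + 1 : ℕ) : ℝ)⁻¹ ≤ (n : ℝ)⁻¹ := by gcongr; omega
  have h_half : (n : ℝ)⁻¹ ≤ 2 * ((n + 1 : ℕ) : ℝ)⁻¹ := by
    push_cast
    field_simp
    linarith
  have h_sub : (n : ℝ)⁻¹ - ((n + 1 : ℕ) : ℝ)⁻¹ = (n : ℝ)⁻¹ * ((n + 1 : ℕ) : ℝ)⁻¹ := by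
    push_cast
    field_simp
    ring
  generalize ((n + 1 : ℕ) : ℝ)⁻¹ = v at *
  have h_v : 0 ≤ v := by linarith [inv_pos.2 h_pos]
  calc (n : ℝ)⁻¹ ^ (N + 2) = (n : ℝ)⁻¹ ^ N * ((n : ℝ)⁻¹ * (n : ℝ)⁻¹) := by ring
    _ ≤ (2 * v) ^ N * ((n : ℝ)⁻¹ * (2 * v)) := by gcongr
    _ ≤ 2 ^ (N + 2) * (v ^ N * ((n : ℝ)⁻¹ - v)) := by
      rw [h_sub]
      have : 0 ≤ 2 ^ N * v ^ N * ((n : ℝ)⁻¹ * v) := by positivity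
      linear_combination 2 * this
    _ ≤ 2 ^ (N + 2) * ((n : ℝ)⁻¹ ^ (N + 1) - v ^ (N + 1)) := by
      gcongr
      have : v ^ N * (n : ℝ)⁻¹ ≤ (n : ℝ)⁻¹ ^ N * (n : ℝ)⁻¹ := by gcongr
      linear_combination this

lemma isBigO_inv_pow_of_sub_succ {u : ℕ → ℝ} (hu : Tendsto u atTop (nhds 0))
    (h_sub : (fun n => u n - u (n + 1)) =O[atTop] fun n : ℕ => (n : ℝ)⁻¹ ^ (N + 2)) :
    u =O[atTop] fun n : ℕ => (n : ℝ)⁻¹ ^ (N + 1) := by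
  obtain ⟨C, hC, h_bound⟩ := h_sub.exists_nonneg
  have h_pow : Tendsto (fun n : ℕ => C * 2 ^ (N + 2) * (n : ℝ)⁻¹ ^ (N + 1)) atTop (nhds 0) := by
    simpa using (tendsto_inv_atTop_nhds_zero_nat (𝕜 := ℝ)).pow (N + 1) |>.const_mul _
  have h_step : ∀ᶠ n : ℕ in atTop, |u n - u (n + 1)| ≤
      C * 2 ^ (N + 2) * (n : ℝ)⁻¹ ^ (N + 1) - C * 2 ^ (N + 2) * ((n + 1 : ℕ) : ℝ)⁻¹ ^ (N + 1) := by
    filter_upwards [h_bound.bound, eventually_ne_atTop 0] with n hn hn₀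
    rw [Real.norm_eq_abs, norm_pow, norm_inv, RCLike.norm_natCast] at hn
    have := mul_le_mul_of_nonneg_left (inv_pow_le_two_pow_mul_sub hn₀ N) hC
    linarith
  have h_upper := eventually_nonneg_of_eventually_succ_le
    (by simpa only [sub_zero] using h_pow.sub hu)
    (h_step.mono fun n hn => by linarith [le_abs_self (u n - u (n + 1))])
  have h_lower := eventually_nonneg_of_eventually_succ_le
    (by simpa only [add_zero] using h_pow.add hu)
    (h_step.mono fun n hn => by linarith [neg_abs_le (u n - u (n + 1))])
  refine .of_bound (C * 2 ^ (N + 2)) ?_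
  filter_upwards [h_upper, h_lower] with n h_upper h_lower
  rw [Real.norm_eq_abs, norm_pow, norm_inv, RCLike.norm_natCast, abs_le]
  constructor <;> linarith

open PowerSeries

lemma hasExpansion_zetaTail_of_sub_succ (hp : 2 ≤ p) {P : Polynomial ℝ} (hP : P.eval 0 = 0) {C : ℝ}
    (h_sub : ∀ n : ℕ, n ≠ 0 → |1 / (n : ℝ) ^ p - (P.eval (n : ℝ)⁻¹ - P.eval ((n : ℝ) + 1)⁻¹)| ≤
      C * (n : ℝ)⁻¹ ^ (N + 2)) :
    HasExpansion (N + 1) (zetaTail p) P := by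
  refine (HasExpansion.polynomial (N + 1) P).congr_isBigO (isBigO_inv_pow_of_sub_succ ?_
    (.of_bound C ?_))
  · have h_eval := (P.continuous.tendsto 0).comp (tendsto_inv_atTop_nhds_zero_nat (𝕜 := ℝ))
    simpa [hP] using (tendsto_zetaTail p).sub h_eval
  · filter_upwards [eventually_ne_atTop 0] with n hn
    have h_tail := sum_range_one_div_add_pow hp n 1
    rw [range_one, sum_singleton, add_zero] at h_tail
    rw [Real.norm_eq_abs, norm_pow, norm_inv, RCLike.norm_natCast]
    convert h_sub n hn using 2
    rw [h_tail]
    push_cast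
    ring

lemma inv_pow_mul_inv_succ_pow_le {n : ℕ} (hn : n ≠ 0) {i j : ℕ} (h : N ≤ i + j) :
    (n : ℝ)⁻¹ ^ i * ((n : ℝ) + 1)⁻¹ ^ j ≤ (n : ℝ)⁻¹ ^ N := by
  have : (0 : ℝ) < n := by positivity
  calc (n : ℝ)⁻¹ ^ i * ((n : ℝ) + 1)⁻¹ ^ j ≤ (n : ℝ)⁻¹ ^ i * (n : ℝ)⁻¹ ^ j := by
        gcongr
        linarith
    _ ≤ (n : ℝ)⁻¹ ^ N := by
        rw [← pow_add]
        exact pow_le_pow_of_le_one (by positivity) (Nat.cast_inv_le_one n) h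

lemma hasExpansion_zetaTail_two :
    HasExpansion 5 (zetaTail 2) (X ^ 1 * ofCoeffs [1, 1 / 2, 1 / 6, 0]) := by
  refine (hasExpansion_zetaTail_of_sub_succ le_rfl (C := 1 / 6)
    (P := .X + .C (1 / 2) * .X ^ 2 + .C (1 / 6) * .X ^ 3) (by simp) fun n hn => ?_).congr_coeff
    fun i hi => ?_
  · have h_sub : 1 / (n : ℝ) ^ 2 - (((n : ℝ)⁻¹ + 1 / 2 * (n : ℝ)⁻¹ ^ 2 + 1 / 6 * (n : ℝ)⁻¹ ^ 3) -
        (((n : ℝ) + 1)⁻¹ + 1 / 2 * ((n : ℝ) + 1)⁻¹ ^ 2 + 1 / 6 * ((n : ℝ) + 1)⁻¹ ^ 3)) =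
        -(1 / 6 * ((n : ℝ)⁻¹ ^ 3 * ((n : ℝ) + 1)⁻¹ ^ 3)) := by
      field_simp
      ring
    simp only [Polynomial.eval_add, Polynomial.eval_mul, Polynomial.eval_pow, Polynomial.eval_X,
      Polynomial.eval_C]
    rw [h_sub, abs_neg, abs_of_nonneg (by positivity)]
    gcongr
    exact inv_pow_mul_inv_succ_pow_le hn le_rfl
  · interval_cases i <;> simp [PowerSeries.coeff_X]

lemma hasExpansion_zetaTail_three :
    HasExpansion 4 (zetaTail 3) (X ^ 2 * ofCoeffs [1 / 2, 1 / 2]) := by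
  refine (hasExpansion_zetaTail_of_sub_succ (by simp) (C := 1)
    (P := .C (1 / 2) * .X ^ 2 + .C (1 / 2) * .X ^ 3) (by simp) fun n hn => ?_).congr_coeff
    fun i hi => ?_
  · have h_sub : 1 / (n : ℝ) ^ 3 - ((1 / 2 * (n : ℝ)⁻¹ ^ 2 + 1 / 2 * (n : ℝ)⁻¹ ^ 3) -
        (1 / 2 * ((n : ℝ) + 1)⁻¹ ^ 2 + 1 / 2 * ((n : ℝ) + 1)⁻¹ ^ 3)) =
        1 / 2 * ((n : ℝ)⁻¹ ^ 2 * ((n : ℝ) + 1)⁻¹ ^ 3) +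
          1 / 2 * ((n : ℝ)⁻¹ ^ 3 * ((n : ℝ) + 1)⁻¹ ^ 2) := by
      field_simp
      ring
    simp only [Polynomial.eval_add, Polynomial.eval_mul, Polynomial.eval_pow, Polynomial.eval_X,
      Polynomial.eval_C]
    rw [h_sub, abs_of_nonneg (by positivity)]
    linarith [inv_pow_mul_inv_succ_pow_le hn (i := 2) (j := 3) (N := 5) le_rfl,
      inv_pow_mul_inv_succ_pow_le hn (i := 3) (j := 2) (N := 5) le_rfl]
  · interval_cases i <;> simp [coeff_X_pow_mul']

lemma hasExpansion_zetaTail_four :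
    HasExpansion 4 (zetaTail 4) (X ^ 3 * ofCoeffs [1 / 3]) := by
  refine (hasExpansion_zetaTail_of_sub_succ (by simp) (C := 17 / 3)
    (P := .C (1 / 3) * .X ^ 3) (by simp) fun n hn => ?_).congr_coeff fun i hi => ?_
  · have h_sub : 1 / (n : ℝ) ^ 4 - (1 / 3 * (n : ℝ)⁻¹ ^ 3 - 1 / 3 * ((n : ℝ) + 1)⁻¹ ^ 3) =
        2 * ((n : ℝ)⁻¹ ^ 2 * ((n : ℝ) + 1)⁻¹ ^ 3) + 8 / 3 * ((n : ℝ)⁻¹ ^ 3 * ((n : ℝ) + 1)⁻¹ ^ 3) +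
          (n : ℝ)⁻¹ ^ 4 * ((n : ℝ) + 1)⁻¹ ^ 3 := by
      field_simp
      ring
    simp only [Polynomial.eval_mul, Polynomial.eval_pow, Polynomial.eval_X, Polynomial.eval_C]
    rw [h_sub, abs_of_nonneg (by positivity)]
    linarith [inv_pow_mul_inv_succ_pow_le hn (i := 2) (j := 3) (N := 5) le_rfl,
      inv_pow_mul_inv_succ_pow_le hn (i := 3) (j := 3) (N := 5) (by simp),
      inv_pow_mul_inv_succ_pow_le hn (i := 4) (j := 3) (N := 5) (by simp)]
  · interval_cases i <;> simp [coeff_X_pow_mul']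

end ZetaTail

/-! ### Sums of powers of `1 / (a + c / b)` -/

section LatticeSums

open PowerSeries

variable {p N : ℕ}

lemma one_add_X_pow_mul_mk_choose (p : ℕ) : ((1 + X) ^ (p + 1) : ℝ⟦X⟧) *
    (PowerSeries.mk fun n => (-1) ^ n * ((p + n).choose p : ℝ)) = 1 := by
  have h := congrArg (rescale (-1 : ℝ)) (mk_add_choose_mul_one_sub_pow_eq_one (S := ℝ) p)
  rwa [map_mul, map_pow, map_sub, map_one, rescale_neg_one_X, sub_neg_eq_add, rescale_mk,
    mul_comm] at h

lemma hasExpansion_one_div_add_div_pow {d : ℕ} (hd : d ≠ 0) (hN : 0 < N) (p : ℕ) :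
    HasExpansion N (fun b => 1 / ((d : ℝ) + d / b) ^ (p + 1))
      (PowerSeries.mk fun n => (-1) ^ n * ((p + n).choose p : ℝ) / (d : ℝ) ^ (p + 1)) := by
  have h_base := HasExpansion.polynomial N ((1 + Polynomial.X) ^ (p + 1))
  simp only [Polynomial.eval_pow, Polynomial.eval_add, Polynomial.eval_one, Polynomial.eval_X,
    Polynomial.coe_pow, Polynomial.coe_add, Polynomial.coe_one, Polynomial.coe_X] at h_base
  refine h_base.of_mul (HasExpansion.const N (1 / (d : ℝ) ^ (p + 1))) ?_ hN (by simp) fun i _ => ?_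
  · refine .of_forall fun b => ?_
    have h_factor : (d : ℝ) + d / b = d * (1 + (b : ℝ)⁻¹) := by ring
    rw [h_factor, mul_pow]
    field_simp
  · have h_smul : (PowerSeries.mk fun n => (-1) ^ n * ((p + n).choose p : ℝ) / (d : ℝ) ^ (p + 1)) =
        C (1 / (d : ℝ) ^ (p + 1)) * PowerSeries.mk fun n => (-1) ^ n * ((p + n).choose p : ℝ) := by
      ext n
      rw [coeff_C_mul, coeff_mk, coeff_mk]
      ring
    rw [h_smul, mul_left_comm, one_add_X_pow_mul_mk_choose, mul_one]

lemma sum_range_one_div_add_div_pow {b : ℕ} (hb : b ≠ 0) (hp : 2 ≤ p) (a : ℕ) :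
    ∑ c ∈ range b, 1 / ((a : ℝ) + c / b) ^ p =
      b ^ p * (zetaTail p (a * b) - zetaTail p ((a + 1) * b)) := by
  rw [add_one_mul, ← sum_range_one_div_add_pow hp, mul_sum]
  refine sum_congr rfl fun c _ => ?_
  have h_eq : (a : ℝ) + c / b = ((a * b + c : ℕ) : ℝ) / b := by
    push_cast
    field_simp
  rw [h_eq, div_pow, one_div_div, mul_one_div]

lemma sum_Ico_sum_range_one_div_add_div_pow {b : ℕ} (hb : b ≠ 0) (hp : 2 ≤ p) :
    ∑ a ∈ Ico 1 b, ∑ c ∈ range b, 1 / ((a : ℝ) + c / b) ^ p =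
      b ^ p * (zetaTail p b - zetaTail p (b * b)) := by
  simp only [sum_range_one_div_add_div_pow hb hp, ← mul_sum]
  rw [sum_Ico_eq_sum_range]
  have h := sum_range_sub' (fun a => zetaTail p ((1 + a) * b)) (b - 1)
  rw [add_zero, one_mul, Nat.add_sub_cancel' (Nat.one_le_iff_ne_zero.2 hb)] at h
  rw [← h]
  simp only [add_assoc]

lemma sum_Ico_one_div_pow {b : ℕ} (hb : b ≠ 0) (hp : 2 ≤ p) :
    ∑ a ∈ Ico 1 b, 1 / (a : ℝ) ^ p = zetaR p - zetaTail p b := by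
  rw [sum_Ico_eq_sum_range, sum_range_one_div_add_pow hp, zetaTail_one,
    Nat.add_sub_cancel' (Nat.one_le_iff_ne_zero.2 hb)]

lemma abs_one_div_add_sq_sub_le {a u : ℝ} (ha : 1 ≤ a) (hu : 0 ≤ u) :
    |1 / (a + u) ^ 2 - (1 / a ^ 2 - 2 * u * (1 / a ^ 3) + 3 * u ^ 2 * (1 / a ^ 4))| ≤
      4 * u ^ 3 * (1 / a ^ 2) := by
  have h_eq : 1 / (a + u) ^ 2 - (1 / a ^ 2 - 2 * u * (1 / a ^ 3) + 3 * u ^ 2 * (1 / a ^ 4)) =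
      -((4 * a + 3 * u) / (a ^ 2 * (a + u) ^ 2) * (u ^ 3 * (1 / a ^ 2))) := by
    field_simp
    ring
  have h_le : (4 * a + 3 * u) / (a ^ 2 * (a + u) ^ 2) ≤ 4 := by
    rw [div_le_iff₀ (by positivity)]
    have h_one : 1 ≤ a ^ 2 * (a + u) :=
      one_le_mul_of_one_le_of_one_le (one_le_pow₀ ha) (by linarith)
    nlinarith
  rw [h_eq, abs_neg, abs_of_nonneg (by positivity)]
  exact (mul_le_mul_of_nonneg_right h_le (by positivity)).trans_eq (by ring)

lemma abs_one_div_add_cube_sub_le {a u : ℝ} (ha : 1 ≤ a) (hu : 0 ≤ u) :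
    |1 / (a + u) ^ 3 - 1 / a ^ 3| ≤ 3 * u * (1 / a ^ 2) := by
  have h_eq : 1 / (a + u) ^ 3 - 1 / a ^ 3 =
      -((3 * a ^ 2 + 3 * a * u + u ^ 2) / (a * (a + u) ^ 3) * (u * (1 / a ^ 2))) := by
    field_simp
    ring
  have h_le : (3 * a ^ 2 + 3 * a * u + u ^ 2) / (a * (a + u) ^ 3) ≤ 3 := by
    rw [div_le_iff₀ (by positivity)]
    have h_one : 1 ≤ a * (a + u) := one_le_mul_of_one_le_of_one_le ha (by linarith)
    nlinarith [sq_nonneg (a + u), mul_nonneg (by linarith : 0 ≤ a) hu]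
  rw [h_eq, abs_neg, abs_of_nonneg (by positivity)]
  exact (mul_le_mul_of_nonneg_right h_le (by positivity)).trans_eq (by ring)

lemma isBigO_sum_Ico {r : ℕ → ℕ → ℝ} {C : ℝ}
    (hr : ∀ b, ∀ a ∈ Ico 1 b, |r b a| ≤ C * (b : ℝ)⁻¹ ^ N * (1 / (a : ℝ) ^ 2)) :
    (fun b => ∑ a ∈ Ico 1 b, r b a) =O[atTop] fun b : ℕ => (b : ℝ)⁻¹ ^ N := by
  have h_zeta : (fun b : ℕ => zetaR 2 - zetaTail 2 b) =O[atTop] fun _ => (1 : ℝ) :=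
    ((tendsto_zetaTail 2).const_sub _).isBigO_one ℝ
  have h_const := (h_zeta.const_mul_left C).mul (isBigO_refl (fun b : ℕ => (b : ℝ)⁻¹ ^ N) atTop)
  simp only [one_mul] at h_const
  refine IsBigO.trans (.of_bound' ?_) h_const
  filter_upwards [eventually_ne_atTop 0] with b hb
  calc ‖∑ a ∈ Ico 1 b, r b a‖ ≤ ∑ a ∈ Ico 1 b, C * (b : ℝ)⁻¹ ^ N * (1 / (a : ℝ) ^ 2) :=
          norm_sum_le_of_le _ (hr b)
      _ = C * (zetaR 2 - zetaTail 2 b) * (b : ℝ)⁻¹ ^ N := by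
          rw [← mul_sum, sum_Ico_one_div_pow hb le_rfl]
          ring
      _ ≤ _ := le_abs_self _

lemma hasExpansion_sum_Ico_one_div_add_sq (d : ℕ) :
    HasExpansion 3 (fun b => ∑ a ∈ Ico 1 b, 1 / ((a : ℝ) + d / b) ^ 2)
      (ofCoeffs [zetaR 2, -1 - 2 * d * zetaR 3, -1 / 2 + 3 * d ^ 2 * zetaR 4]) := by
  have h_two := (HasExpansion.const 3 (zetaR 2)).sub (hasExpansion_zetaTail_two.mono (by simp))
  have h_three := (HasExpansion.const 3 (zetaR 3)).sub (hasExpansion_zetaTail_three.mono (by simp))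
  have h_four := (HasExpansion.const 3 (zetaR 4)).sub (hasExpansion_zetaTail_four.mono (by simp))
  have h_main := (h_two.sub (((HasExpansion.inv_pow 3 1).mul h_three).const_mul (2 * d))).add
    (((HasExpansion.inv_pow 3 2).mul h_four).const_mul (3 * d ^ 2))
  refine (h_main.congr_isBigO ((isBigO_sum_Ico (C := 4 * d ^ 3) fun b a ha =>
    (abs_one_div_add_sq_sub_le (a := a) (u := d / b) (by exact_mod_cast (mem_Ico.1 ha).1)
      (by positivity)).trans_eq (by ring)).congr' ?_ .rfl)).congr_coeff fun i hi => ?_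
  · filter_upwards [eventually_ne_atTop 0] with b hb
    simp only [sum_sub_distrib, sum_add_distrib, ← mul_sum, sum_Ico_one_div_pow hb, le_refl,
      Nat.reduceLeDiff]
    ring
  · simp only [map_add, map_sub, coeff_C_mul, coeff_X_pow_mul', coeff_C]
    interval_cases i <;> simp
    ring

lemma hasExpansion_sum_Ico_one_div_add_cube (d : ℕ) :
    HasExpansion 1 (fun b => ∑ a ∈ Ico 1 b, 1 / ((a : ℝ) + d / b) ^ 3) (ofCoeffs [zetaR 3]) := by
  have h_main := (HasExpansion.const 1 (zetaR 3)).sub (hasExpansion_zetaTail_three.mono (by simp))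
  refine (h_main.congr_isBigO ((isBigO_sum_Ico (C := 3 * d) fun b a ha =>
    (abs_one_div_add_cube_sub_le (a := a) (u := d / b) (by exact_mod_cast (mem_Ico.1 ha).1)
      (by positivity)).trans_eq (by ring)).congr' ?_ .rfl)).congr_coeff fun i hi => ?_
  · filter_upwards [eventually_ne_atTop 0] with b hb
    rw [sum_sub_distrib, sum_Ico_one_div_pow hb (by simp)]
  · simp only [map_sub, coeff_X_pow_mul', coeff_C]
    interval_cases i
    simp

end LatticeSums

/-! ### Asymptotic expansions of sums of `invDeviation` -/

section SumInvDeviation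

open PowerSeries

variable {N : ℕ} {p : ℝ⟦X⟧} {ι : Type*} {s : ℕ → Finset ι} {A : ℕ → ι → ℝ}

lemma isBigO_sum_one_div_pow {p : ℕ} (hp : 2 ≤ p) (hA : ∀ᶠ b in atTop, ∀ i ∈ s b, 1 ≤ A b i) :
    (fun b => ∑ i ∈ s b, 1 / A b i ^ p) =O[atTop] fun b => ∑ i ∈ s b, 1 / A b i ^ 2 := by
  refine .of_bound' (hA.mono fun b hb => ?_)
  have h_nonneg (p : ℕ) : 0 ≤ ∑ i ∈ s b, 1 / A b i ^ p :=
    sum_nonneg fun i hi => by have := hb i hi; positivity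
  rw [Real.norm_of_nonneg (h_nonneg p), Real.norm_of_nonneg (h_nonneg 2)]
  refine sum_le_sum fun i hi => ?_
  have := hb i hi
  gcongr

theorem isBigO_sum_invDeviation_sub (d k : ℕ) {J : ℕ} (hJ : 2 ≤ J)
    (hA : ∀ᶠ b in atTop, ∀ i ∈ s b, 1 ≤ A b i) :
    (fun b => ∑ i ∈ s b, invDeviation b d k (A b i) - ∑ j ∈ Ico 1 J,
      (-1) ^ j * (moment b d k j * (b : ℝ)⁻¹ ^ j * ∑ i ∈ s b, 1 / A b i ^ (j + 1)))
      =O[atTop] fun b => (b : ℝ)⁻¹ ^ (2 * k + J + 2) * ∑ i ∈ s b, 1 / A b i ^ 2 := by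
  have h_rem : (fun b => ∑ i ∈ s b, (invDeviation b d k (A b i) - ∑ j ∈ range (J + 1),
      (-1) ^ j * moment b d k j * (b : ℝ)⁻¹ ^ j / A b i ^ (j + 1)))
      =O[atTop] fun b => (b : ℝ)⁻¹ ^ (2 * k + J + 2) * ∑ i ∈ s b, 1 / A b i ^ 2 := by
    refine .of_bound (2 ^ (k + 1) * (d + 1) * (J + 1)) ?_
    filter_upwards [hA, eventually_gt_atTop d] with b hb hd
    refine (norm_sum_le_of_le _ fun i hi => abs_invDeviation_sub_sum_le hd k J (hb i hi)).trans ?_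
    rw [← mul_sum, mul_assoc]
    gcongr
    exact le_abs_self _
  have h_top : (fun b => (-1) ^ J *
      (moment b d k J * (b : ℝ)⁻¹ ^ J * ∑ i ∈ s b, 1 / A b i ^ (J + 1)))
      =O[atTop] fun b => (b : ℝ)⁻¹ ^ (2 * k + J + 2) * ∑ i ∈ s b, 1 / A b i ^ 2 := by
    refine (((moment_isBigO d k hJ).mul (isBigO_refl (fun b : ℕ => (b : ℝ)⁻¹ ^ J) atTop)).mul
      (isBigO_sum_one_div_pow (by omega : 2 ≤ J + 1) hA)).const_mul_left _ |>.congr_right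
      fun b => ?_
    ring
  refine (h_rem.add h_top).congr' ?_ .rfl
  filter_upwards [eventually_gt_atTop d] with b hd
  have h_swap : ∑ i ∈ s b, ∑ j ∈ range (J + 1),
      (-1) ^ j * moment b d k j * (b : ℝ)⁻¹ ^ j / A b i ^ (j + 1) = ∑ j ∈ range (J + 1),
      (-1) ^ j * (moment b d k j * (b : ℝ)⁻¹ ^ j * ∑ i ∈ s b, 1 / A b i ^ (j + 1)) := by
    rw [sum_comm]
    refine sum_congr rfl fun j _ => ?_
    rw [mul_sum, mul_sum]
    exact sum_congr rfl fun i _ => by ring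
  rw [sum_sub_distrib, h_swap, sum_range_succ, range_eq_Ico, sum_eq_sum_Ico_succ_bot (by omega),
    moment_zero hd]
  ring

lemma hasExpansion_sum_invDeviation (d k : ℕ) {J : ℕ} (hJ : 2 ≤ J)
    (hA : ∀ᶠ b in atTop, ∀ i ∈ s b, 1 ≤ A b i)
    (h_sq : (fun b : ℕ => (b : ℝ)⁻¹ ^ (2 * k + J + 2) * ∑ i ∈ s b, 1 / A b i ^ 2)
      =O[atTop] fun b : ℕ => (b : ℝ)⁻¹ ^ N)
    (h : HasExpansion N (fun b => ∑ j ∈ Ico 1 J, (-1) ^ j *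
      (moment b d k j * (b : ℝ)⁻¹ ^ j * ∑ i ∈ s b, 1 / A b i ^ (j + 1))) p) :
    HasExpansion N (fun b => ∑ i ∈ s b, invDeviation b d k (A b i)) p :=
  h.congr_isBigO ((isBigO_sum_invDeviation_sub d k hJ hA).trans h_sq)

end SumInvDeviation

section IrwinSumTwo

open PowerSeries

variable {d k m N : ℕ} {l : List ℝ}

lemma hasExpansion_moment_mul_inv_pow (N e m : ℕ)
    (h : ∀ i < N + e, coeff i (momentSeries d k m) = coeff i (ofCoeffs (List.replicate e 0 ++ l))) :
    HasExpansion (N + (e + m)) (fun b => moment b d k m * (b : ℝ)⁻¹ ^ m)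
      (X ^ (e + m) * ofCoeffs l) := by
  simp only [ofCoeffs_replicate_append] at h
  exact ((hasExpansion_moment _ d k m).congr_coeff h).X_pow_mul_mul_inv_pow m

lemma hasExpansion_natCast_mul_moment (N e : ℕ)
    (h : ∀ i < N + (e + 1), coeff i (momentSeries d k m) =
      coeff i (ofCoeffs (List.replicate (e + 1) 0 ++ l))) :
    HasExpansion (N + e) (fun b => b * moment b d k m) (X ^ e * ofCoeffs l) := by
  simp only [ofCoeffs_replicate_append] at h
  exact ((hasExpansion_moment _ d k m).congr_coeff h).natCast_mul

lemma hasExpansion_moment_mul_inv_pow_mul_one_div (hd : d ≠ 0) (N e m : ℕ)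
    (h : ∀ i < N + 1 + e, coeff i (momentSeries d k m) =
      coeff i (ofCoeffs (List.replicate e 0 ++ l))) :
    HasExpansion (N + 1 + (e + m))
      (fun b => moment b d k m * (b : ℝ)⁻¹ ^ m * (1 / ((d : ℝ) + d / b) ^ (m + 1)))
      (X ^ (e + m) * (ofCoeffs l *
        PowerSeries.mk fun n => (-1) ^ n * ((m + n).choose m : ℝ) / (d : ℝ) ^ (m + 1))) :=
  (hasExpansion_moment_mul_inv_pow _ e m h).X_pow_mul_mul_right
    (hasExpansion_one_div_add_div_pow hd N.succ_pos m)

lemma one_le_natCast_add_div {a : ℕ} (ha : a ≠ 0) (b c : ℕ) : 1 ≤ (a : ℝ) + c / b :=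
  le_add_of_le_of_nonneg (Nat.one_le_cast.2 (Nat.one_le_iff_ne_zero.2 ha)) (by positivity)

theorem hasExpansion_invDeviation_self (hd : d ≠ 0) :
    HasExpansion 7 (fun b => invDeviation b d 0 (d + d / b))
      (X ^ 2 * ofCoeffs [(d + 1 / 2) / d ^ 2, -(d + 1 / 2) / d ^ 2,
        (d + 1 / 2) / d ^ 2 - (d ^ 2 + 2 * d + 5 / 6) / d ^ 3,
        -(2 * d + 1) / d ^ 2 + 3 * (d ^ 2 + 2 * d + 5 / 6) / d ^ 3 + (d + 1 / 2) / d ^ 4,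
        (2 * d + 1) / d ^ 2 - (5 * d ^ 2 + 12 * d + 16 / 3) / d ^ 3 +
          (d ^ 3 + 3 / 2 * d ^ 2 - 7 / 2 * d - 2) / d ^ 4 - (d + 1 / 2) / d ^ 5]) := by
  have h_one := hasExpansion_moment_mul_inv_pow_mul_one_div hd 4 1 1 (coeff_momentSeries_zero_one d)
  have h_two := hasExpansion_moment_mul_inv_pow_mul_one_div hd 2 2 2 (coeff_momentSeries_zero_two d)
  have h_three :=
    hasExpansion_moment_mul_inv_pow_mul_one_div hd 1 2 3 (coeff_momentSeries_zero_three d)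
  have h_four :=
    hasExpansion_moment_mul_inv_pow_mul_one_div hd 0 2 4 (coeff_momentSeries_zero_four d)
  have h_sq := (isBigO_refl (fun b : ℕ => (b : ℝ)⁻¹ ^ 7) atTop).mul
    (hasExpansion_one_div_add_div_pow hd one_pos 1).isBigO_one
  have h_sum := hasExpansion_sum_invDeviation (N := 7) (s := fun _ => {()}) d 0 (J := 5) (by simp)
    (.of_forall fun b _ _ => one_le_natCast_add_div hd b d) (by simpa using h_sq)
    (((h_two.sub h_one).add (h_four.sub h_three)).congr' (.of_forall fun b => ?_))
  · simp only [sum_singleton, Nat.cast_zero] at h_sum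
    refine h_sum.congr_coeff fun i hi => ?_
    simp only [map_add, map_sub, coeff_X_pow_mul']
    interval_cases i <;> norm_num [coeff_mul_eq_sum_range, sum_range_succ, Nat.choose,
      -coeff_zero_eq_constantCoeff] <;> ring
  · norm_num [sum_Ico_succ_top]
    ring

lemma hasExpansion_zetaTail_two_mul_sub (hd : d ≠ 0) :
    HasExpansion 5 (fun b => zetaTail 2 (d * b) - zetaTail 2 ((d + 1) * b))
      (X ^ 1 * ofCoeffs [1 / d - 1 / (d + 1), (1 / d ^ 2 - 1 / (d + 1) ^ 2) / 2,
        (1 / d ^ 3 - 1 / (d + 1) ^ 3) / 6, 0]) := by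
  refine ((hasExpansion_zetaTail_two.comp_mul (Nat.pos_of_ne_zero hd)).sub
    (hasExpansion_zetaTail_two.comp_mul d.succ_pos)).congr_coeff fun i hi => ?_
  simp only [map_sub, coeff_rescale, coeff_X_pow_mul']
  interval_cases i <;> norm_num [-coeff_zero_eq_constantCoeff] <;> ring

lemma hasExpansion_zetaTail_three_mul_sub (hd : d ≠ 0) :
    HasExpansion 4 (fun b => zetaTail 3 (d * b) - zetaTail 3 ((d + 1) * b))
      (X ^ 2 * ofCoeffs [(1 / d ^ 2 - 1 / (d + 1) ^ 2) / 2,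
        (1 / d ^ 3 - 1 / (d + 1) ^ 3) / 2]) := by
  refine ((hasExpansion_zetaTail_three.comp_mul (Nat.pos_of_ne_zero hd)).sub
    (hasExpansion_zetaTail_three.comp_mul d.succ_pos)).congr_coeff fun i hi => ?_
  simp only [map_sub, coeff_rescale, coeff_X_pow_mul']
  interval_cases i <;> norm_num [-coeff_zero_eq_constantCoeff] <;> ring

lemma hasExpansion_zetaTail_four_mul_sub (hd : d ≠ 0) :
    HasExpansion 4 (fun b => zetaTail 4 (d * b) - zetaTail 4 ((d + 1) * b))
      (X ^ 3 * ofCoeffs [(1 / d ^ 3 - 1 / (d + 1) ^ 3) / 3]) := by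
  refine ((hasExpansion_zetaTail_four.comp_mul (Nat.pos_of_ne_zero hd)).sub
    (hasExpansion_zetaTail_four.comp_mul d.succ_pos)).congr_coeff fun i hi => ?_
  simp only [map_sub, coeff_rescale, coeff_X_pow_mul']
  interval_cases i <;> norm_num [-coeff_zero_eq_constantCoeff]
  ring

lemma isBigO_inv_pow_mul_of_eq {p : ℝ⟦X⟧} {W T S : ℕ → ℝ} (hW : HasExpansion (N + 1) W (X ^ 1 * p))
    (hT : T =O[atTop] fun _ => (1 : ℝ)) (hS : ∀ᶠ b : ℕ in atTop, S b = (b : ℝ) ^ 2 * W b - T b)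
    (n : ℕ) :
    (fun b : ℕ => (b : ℝ)⁻¹ ^ (n + 2) * S b) =O[atTop] fun b : ℕ => (b : ℝ)⁻¹ ^ (n + 1) := by
  have h_W : (fun b : ℕ => (b : ℝ)⁻¹ ^ n * W b) =O[atTop] fun b : ℕ => (b : ℝ)⁻¹ ^ (n + 1) :=
    ((isBigO_refl _ _).mul hW.isBigO_inv_pow).congr_right fun b => by ring
  have h_T : (fun b : ℕ => (b : ℝ)⁻¹ ^ (n + 2) * T b) =O[atTop]
      fun b : ℕ => (b : ℝ)⁻¹ ^ (n + 1) :=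
    (((isBigO_refl _ _).mul hT).congr_right fun b => mul_one _).trans
      (isBigO_inv_pow_of_le (by simp))
  refine (h_W.sub h_T).congr' ?_ .rfl
  filter_upwards [hS, eventually_ne_atTop 0] with b hb hb₀
  have h_cancel : (b : ℝ)⁻¹ ^ 2 * (b : ℝ) ^ 2 = 1 := by
    rw [← mul_pow, inv_mul_cancel₀ (Nat.cast_ne_zero.2 hb₀), one_pow]
  rw [hb]
  linear_combination (-(b : ℝ)⁻¹ ^ n * W b) * h_cancel

lemma sum_range_erase_one_div_pow {b q : ℕ} (hd : d < b) (hq : 2 ≤ q) :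
    ∑ c ∈ (range b).erase d, 1 / ((d : ℝ) + c / b) ^ q =
      b ^ q * (zetaTail q (d * b) - zetaTail q ((d + 1) * b)) - 1 / ((d : ℝ) + d / b) ^ q := by
  rw [sum_erase_eq_sub (mem_range.2 hd), sum_range_one_div_add_div_pow (by omega) hq]

lemma moment_mul_sum_range_erase {b j : ℕ} (k : ℤ) (hd : d < b) (hj : 1 ≤ j) :
    moment b d k j * (b : ℝ)⁻¹ ^ j * ∑ c ∈ (range b).erase d, 1 / ((d : ℝ) + c / b) ^ (j + 1) =
      b * moment b d k j * (zetaTail (j + 1) (d * b) - zetaTail (j + 1) ((d + 1) * b)) -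
        moment b d k j * (b : ℝ)⁻¹ ^ j * (1 / ((d : ℝ) + d / b) ^ (j + 1)) := by
  have hb : (b : ℝ) ≠ 0 := Nat.cast_ne_zero.2 (by omega)
  rw [sum_range_erase_one_div_pow hd (by omega), mul_sub, pow_succ, inv_pow]
  field_simp

theorem hasExpansion_sum_range_erase_invDeviation (hd : d ≠ 0) :
    HasExpansion 7 (fun b => ∑ c ∈ (range b).erase d, invDeviation b d 1 (d + c / b))
      (X ^ 3 * ofCoeffs [(d + 1 / 2) * (1 / d - 1 / (d + 1)),
        (d + 1 / 2) * ((1 / d ^ 2 - 1 / (d + 1) ^ 2) / 2 + 2 * (1 / d - 1 / (d + 1)) - 1 / d ^ 2),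
        (d + 1 / 2) * ((1 / d ^ 3 - 1 / (d + 1) ^ 3) / 6 + (1 / d ^ 2 - 1 / (d + 1) ^ 2) +
          (1 / d - 1 / (d + 1))) -
          (2 * d ^ 2 + 2 * d + 1 / 2) * (1 / d ^ 2 - 1 / (d + 1) ^ 2) / 2,
        (d + 1 / 2) * (2 / 3 * (1 / d ^ 3 - 1 / (d + 1) ^ 3) +
          (1 / d ^ 2 - 1 / (d + 1) ^ 2) / 2 - 2 * (1 / d - 1 / (d + 1))) -
          (2 * d ^ 2 + 2 * d + 1 / 2) * ((1 / d ^ 3 - 1 / (d + 1) ^ 3) / 2 - 1 / d ^ 3) -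
          (3 * d ^ 2 + 4 * d + 4 / 3) * (1 / d ^ 2 - 1 / (d + 1) ^ 2) / 2]) := by
  have h_one := (HasExpansion.X_pow_mul_mul (N := 4)
    (hasExpansion_natCast_mul_moment 4 2 (coeff_momentSeries_one_one d))
    (hasExpansion_zetaTail_two_mul_sub hd)).sub
      (hasExpansion_moment_mul_inv_pow_mul_one_div hd 2 3 1
        fun i hi => coeff_momentSeries_one_one d i (by omega))
  have h_two := (HasExpansion.X_pow_mul_mul (N := 2)
    (hasExpansion_natCast_mul_moment 2 3 (coeff_momentSeries_one_two d))
    (hasExpansion_zetaTail_three_mul_sub hd)).sub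
      (hasExpansion_moment_mul_inv_pow_mul_one_div hd 0 4 2
        fun i hi => coeff_momentSeries_one_two d i (by omega))
  have h_three := (HasExpansion.X_pow_mul_mul (N := 1)
    (hasExpansion_natCast_mul_moment 1 3 (coeff_momentSeries_one_three d))
    (hasExpansion_zetaTail_four_mul_sub hd)).sub
      ((hasExpansion_moment_mul_inv_pow_mul_one_div hd 0 4 3
        (coeff_momentSeries_one_three d)).mono (by simp))
  have h_sq := isBigO_inv_pow_mul_of_eq (N := 4) (hasExpansion_zetaTail_two_mul_sub hd)
    (hasExpansion_one_div_add_div_pow hd one_pos 1).isBigO_one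
    ((eventually_gt_atTop d).mono fun b hb => sum_range_erase_one_div_pow hb le_rfl) 6
  have h_sum := hasExpansion_sum_invDeviation (N := 7) d 1 (J := 4) (by simp)
    (.of_forall fun b c _ => one_le_natCast_add_div hd b c) h_sq
    (((h_two.sub h_one).sub h_three).congr' ?_)
  · simp only [Nat.cast_one] at h_sum
    refine h_sum.congr_coeff fun i hi => ?_
    simp only [map_sub, coeff_X_pow_mul']
    interval_cases i <;> norm_num [coeff_mul_eq_sum_range, sum_range_succ, Nat.choose,
      -coeff_zero_eq_constantCoeff] <;> ring
  · filter_upwards [eventually_gt_atTop d] with b hb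
    rw [sum_congr rfl fun j hj => congrArg ((-1) ^ j * ·)
      (moment_mul_sum_range_erase _ hb (mem_Ico.1 hj).1)]
    norm_num [sum_Ico_succ_top]
    ring

lemma hasExpansion_sum_Ico_erase_one_div_add_sq (hd : d ≠ 0) :
    HasExpansion 3 (fun b => ∑ a ∈ (Ico 1 b).erase d, 1 / ((a : ℝ) + d / b) ^ 2)
      (ofCoeffs [zetaR 2 - 1 / d ^ 2, -1 - 2 * d * zetaR 3 + 2 / d ^ 2,
        -1 / 2 + 3 * d ^ 2 * zetaR 4 - 3 / d ^ 2]) := by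
  refine (((hasExpansion_sum_Ico_one_div_add_sq d).sub
    (hasExpansion_one_div_add_div_pow hd (by simp) 1)).congr' ?_).congr_coeff fun i hi => ?_
  · filter_upwards [eventually_gt_atTop d] with b hb
    rw [sum_erase_eq_sub (mem_Ico.2 ⟨by omega, hb⟩)]
  · interval_cases i <;> norm_num [-coeff_zero_eq_constantCoeff]
    ring

lemma hasExpansion_sum_Ico_erase_one_div_add_cube (hd : d ≠ 0) :
    HasExpansion 1 (fun b => ∑ a ∈ (Ico 1 b).erase d, 1 / ((a : ℝ) + d / b) ^ 3)
      (ofCoeffs [zetaR 3 - 1 / d ^ 3]) := by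
  refine (((hasExpansion_sum_Ico_one_div_add_cube d).sub
    (hasExpansion_one_div_add_div_pow hd (by simp) 2)).congr' ?_).congr_coeff fun i hi => ?_
  · filter_upwards [eventually_gt_atTop d] with b hb
    rw [sum_erase_eq_sub (mem_Ico.2 ⟨by omega, hb⟩)]
  · interval_cases i
    norm_num [-coeff_zero_eq_constantCoeff]

theorem hasExpansion_sum_Ico_erase_invDeviation (hd : d ≠ 0) :
    HasExpansion 7 (fun b => ∑ a ∈ (Ico 1 b).erase d, invDeviation b d 1 (a + d / b))
      (X ^ 4 * ofCoeffs [(d + 1 / 2) * (zetaR 2 - 1 / d ^ 2),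
        (d + 1 / 2) * (2 * zetaR 2 - 1 - 2 * d * zetaR 3),
        (d + 1 / 2) * (zetaR 2 - 5 / 2 - 4 * d * zetaR 3 + 3 * d ^ 2 * zetaR 4) -
          (2 * d ^ 2 + 2 * d + 1 / 2) * (zetaR 3 - 1 / d ^ 3)]) := by
  have h_one := (hasExpansion_moment_mul_inv_pow 3 3 1
    fun i hi => coeff_momentSeries_one_one d i (by omega)).X_pow_mul_mul_right
      (hasExpansion_sum_Ico_erase_one_div_add_sq hd)
  have h_two := (hasExpansion_moment_mul_inv_pow 1 4 2
    fun i hi => coeff_momentSeries_one_two d i (by omega)).X_pow_mul_mul_right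
      (hasExpansion_sum_Ico_erase_one_div_add_cube hd)
  have h_sq := (isBigO_refl (fun b : ℕ => (b : ℝ)⁻¹ ^ 7) atTop).mul
    (hasExpansion_sum_Ico_erase_one_div_add_sq hd).isBigO_one
  have h_sum := hasExpansion_sum_invDeviation (N := 7) d 1 (J := 3) (by simp)
    (.of_forall fun b a ha => one_le_natCast_add_div
      (Nat.one_le_iff_ne_zero.1 (mem_Ico.1 (mem_of_mem_erase ha)).1) b d) (by simpa using h_sq)
    ((h_two.sub h_one).congr' (.of_forall fun b => ?_))
  · simp only [Nat.cast_one] at h_sum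
    refine h_sum.congr_coeff fun i hi => ?_
    simp only [map_sub, coeff_X_pow_mul']
    interval_cases i <;> norm_num [coeff_mul_eq_sum_range, sum_range_succ,
      -coeff_zero_eq_constantCoeff] <;> ring
  · norm_num [sum_Ico_succ_top]
    ring

lemma hasExpansion_zetaTail_two_mul_self :
    HasExpansion 3 (fun b => zetaTail 2 (b * b)) (X ^ 2) := by
  have h_sq : Tendsto (fun b : ℕ => b * b) atTop atTop := tendsto_id.atTop_mul_atTop₀ tendsto_id
  have h_rem := (hasExpansion_zetaTail_two.mono (by simp : 2 ≤ 5)).comp_tendsto h_sq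
  refine (HasExpansion.inv_pow 3 2).congr_isBigO ((h_rem.congr (fun b => ?_) fun b => ?_).trans
    (isBigO_inv_pow_of_le (by simp : 3 ≤ 4)))
  · simp [Polynomial.eval, eval₂_trunc_eq_sum_range, sum_range_succ, sq]
  · simp [Function.comp, ← pow_two, ← pow_mul]

lemma hasExpansion_zetaTail_two_sub (hd : d ≠ 0) :
    HasExpansion 3 (fun b => zetaTail 2 b - zetaTail 2 (b * b) -
        (zetaTail 2 (d * b) - zetaTail 2 ((d + 1) * b)))
      (X ^ 1 * ofCoeffs [1 - (1 / d - 1 / (d + 1)),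
        -(1 + (1 / d ^ 2 - 1 / (d + 1) ^ 2)) / 2]) := by
  refine (((hasExpansion_zetaTail_two.mono (by simp)).sub
    hasExpansion_zetaTail_two_mul_self).sub
      ((hasExpansion_zetaTail_two_mul_sub hd).mono (by simp))).congr_coeff fun i hi => ?_
  simp only [map_sub, coeff_X_pow_mul', coeff_X_pow]
  interval_cases i <;> norm_num [-coeff_zero_eq_constantCoeff]
  ring

lemma sum_Ico_erase_sum_range_erase_one_div_sq {b : ℕ} (hd : d ≠ 0) (hb : d < b) :
    ∑ i ∈ ((Ico 1 b).erase d) ×ˢ ((range b).erase d), 1 / ((i.1 : ℝ) + i.2 / b) ^ 2 =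
      b ^ 2 * (zetaTail 2 b - zetaTail 2 (b * b) -
        (zetaTail 2 (d * b) - zetaTail 2 ((d + 1) * b))) -
      ∑ a ∈ (Ico 1 b).erase d, 1 / ((a : ℝ) + d / b) ^ 2 := by
  have hb₀ : b ≠ 0 := by omega
  simp only [sum_product, sum_erase_eq_sub (mem_range.2 hb), sum_sub_distrib]
  rw [sum_erase_eq_sub (mem_Ico.2 ⟨by omega, hb⟩),
    sum_Ico_sum_range_one_div_add_div_pow hb₀ le_rfl, sum_range_one_div_add_div_pow hb₀ le_rfl]
  ring

theorem hasExpansion_sum_Ico_erase_sum_range_erase_invDeviation (hd : d ≠ 0) :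
    HasExpansion 7 (fun b => ∑ a ∈ (Ico 1 b).erase d, ∑ c ∈ (range b).erase d,
        invDeviation b d 2 (a + c / b))
      (X ^ 5 * ofCoeffs [(d + 1 / 2) * (1 - (1 / d - 1 / (d + 1))),
        (d + 1 / 2) * (5 / 2 - 3 * (1 / d - 1 / (d + 1)) -
          (1 / d ^ 2 - 1 / (d + 1) ^ 2) / 2 - zetaR 2 + 1 / d ^ 2)]) := by
  have h_sum_sq := (hasExpansion_sum_Ico_erase_one_div_add_sq hd).mono (by simp : 1 ≤ 3)
  have h_full := (hasExpansion_natCast_mul_moment 2 4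
    (coeff_momentSeries_two_one d)).X_pow_mul_mul (N := 2) (hasExpansion_zetaTail_two_sub hd)
  have h_line := (hasExpansion_moment_mul_inv_pow 1 5 1
    fun i hi => coeff_momentSeries_two_one d i (by omega)).X_pow_mul_mul_right h_sum_sq
  have h_eq := (eventually_gt_atTop d).mono fun b hb =>
    sum_Ico_erase_sum_range_erase_one_div_sq hd hb
  have h_sq := isBigO_inv_pow_mul_of_eq (N := 2) (hasExpansion_zetaTail_two_sub hd)
    h_sum_sq.isBigO_one h_eq 6
  have h_sum := hasExpansion_sum_invDeviation (N := 7) d 2 (J := 2) le_rfl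
    (.of_forall fun b i hi => one_le_natCast_add_div (Nat.one_le_iff_ne_zero.1
      (mem_Ico.1 (mem_of_mem_erase (mem_product.1 hi).1)).1) b i.2) h_sq
    ((h_line.sub h_full).congr' ?_)
  · simp only [sum_product, Nat.cast_ofNat] at h_sum
    refine h_sum.congr_coeff fun i hi => ?_
    simp only [map_sub, coeff_X_pow_mul']
    interval_cases i <;> norm_num [coeff_mul_eq_sum_range, sum_range_succ,
      -coeff_zero_eq_constantCoeff] <;> ring
  · filter_upwards [h_eq, eventually_ne_atTop 0] with b hb hb₀
    norm_num [sum_Ico_succ_top] at hb ⊢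
    rw [hb]
    field_simp
    ring

end IrwinSumTwo

end Irwin

open Finset PowerSeries Irwin

theorem irwin_d_two_asymptotic (d : ℕ) (hd : 1 ≤ d) (a1 a2 a3 a4 a5 : ℝ)
    (h1 : a1 = ((d : ℝ) + 1 / 2) / (d : ℝ) ^ 2)
    (h2 : a2 = -((d : ℝ) + 1 / 2) / ((d : ℝ) ^ 2 * ((d : ℝ) + 1)))
    (h3 : a3 = ((d : ℝ) + 1 / 2) * zetaR 2
      - (30 * (d : ℝ) ^ 3 + 70 * (d : ℝ) ^ 2 + 47 * d + 10)
        / (12 * (d : ℝ) ^ 3 * ((d : ℝ) + 1) ^ 2))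
    (h4 : a4 = -(2 * (d : ℝ) + 1) * d * zetaR 3 + (2 * (d : ℝ) + 1) * zetaR 2
      - (12 * (d : ℝ) ^ 6 - 60 * (d : ℝ) ^ 5 - 258 * (d : ℝ) ^ 4 - 342 * (d : ℝ) ^ 3
          - 212 * (d : ℝ) ^ 2 - 61 * d - 6)
        / (12 * (d : ℝ) ^ 4 * ((d : ℝ) + 1) ^ 3))
    (h5 : a5 = 3 * ((d : ℝ) + 1 / 2) * (d : ℝ) ^ 2 * zetaR 4
      - ((d : ℝ) + 1 / 2) * (6 * (d : ℝ) + 1) * zetaR 3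
      - (60 * (d : ℝ) ^ 7 + 240 * (d : ℝ) ^ 6 + 440 * (d : ℝ) ^ 5 + 561 * (d : ℝ) ^ 4
          + 465 * (d : ℝ) ^ 3 + 219 * (d : ℝ) ^ 2 + 54 * d + 6)
        / (12 * (d : ℝ) ^ 5 * ((d : ℝ) + 1) ^ 3)) :
    (fun b : ℕ => irwinSum b d 2 -
      ((b : ℝ) * Real.log b
        + a1 / (b : ℝ) ^ 3 + a2 / (b : ℝ) ^ 4 + a3 / (b : ℝ) ^ 5 + a4 / (b : ℝ) ^ 6
        + a5 / (b : ℝ) ^ 7))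
      =O[atTop] fun b : ℕ => ((b : ℝ) ^ 8)⁻¹ := by
  have hd₀ : d ≠ 0 := by omega
  have h_mul : HasExpansion 7 (fun b => b * (irwinSum b d 2 - b * Real.log b))
      (ofCoeffs [0, 0, a1, a2, a3, a4, a5]) := by
    refine ((((hasExpansion_invDeviation_self hd₀).add
      (hasExpansion_sum_range_erase_invDeviation hd₀)).add
      (hasExpansion_sum_Ico_erase_invDeviation hd₀)).add
      (hasExpansion_sum_Ico_erase_sum_range_erase_invDeviation hd₀)).congr' ?_ |>.congr_coeff
        fun i hi => ?_
    · filter_upwards [eventually_gt_atTop d] with b hb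
      exact (mul_irwinSum_sub_mul_log hd hb le_rfl).symm
    · simp only [map_add, coeff_X_pow_mul']
      interval_cases i <;> norm_num [-coeff_zero_eq_constantCoeff, *] <;> field_simp <;> ring
  refine ((HasExpansion.X_pow_mul_iff 1).2 (by simpa only [pow_one] using h_mul)).congr
    (fun b => ?_) fun b => inv_pow _ _
  simp only [Polynomial.eval, eval₂_trunc_eq_sum_range, sum_range_succ, coeff_X_pow_mul']
  simp [-coeff_zero_eq_constantCoeff]
  ring
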